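/- arXiv:2207.11758 — 2 statements merged into one kernel-verified Lean document; each statement's English description precedes it below -/
import Mathlib

section
/- For every integer k ≥ 1 there exists a constant C_k > 0 (depending only on k) such that for all integers x ≥ 1 and H ≥ 1, the Steinhaus expectation at level y = x + H satisfies | 𝔼_f |H^{-1/2} ∑_{x < n ≤ x+H} f(n)|^{2k} − k! | ≤ C_k · ( H^{-1} + H^{1/2} / max(x,H)^{1/2} + H · (log x + log H)^{2k²+2} / max(x,H) ), where the sum is over integers n with x < n ≤ x+H and log denotes the natural logarithm. -/
open MeasureTheory

/-- The Steinhaus probability space at level `y`: a uniform random point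
`ω p ∈ [0,1]` for each coordinate `p ≤ y` (only the prime coordinates are used);
the random multiplicative function has `f(p) = e^{2πi ω(p)}`, which is uniformly
distributed on the unit circle, independently over primes `p ≤ y`. -/
noncomputable def steinhausMeasure (y : ℕ) : Measure (Fin (y + 1) → ℝ) :=
  Measure.pi fun _ => volume.restrict (Set.Ioc (0 : ℝ) 1)

/-- The Steinhaus random completely multiplicative function at level `y`:
`f_ω(n) = ∏_{p ≤ y prime} e^{2πi ω(p) v_p(n)}`. -/
noncomputable def steinhausF (y : ℕ) (ω : Fin (y + 1) → ℝ) (n : ℕ) : ℂ :=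
  ∏ p ∈ (Finset.range (y + 1)).attach,
    if Nat.Prime (p : ℕ) then
      Complex.exp
        (((2 * Real.pi * ω ⟨(p : ℕ), Finset.mem_range.mp p.2⟩ *
            (padicValNat (p : ℕ) n : ℝ) : ℝ) : ℂ) * Complex.I)
    else 1

lemma steinhausF_eq_prod (y : ℕ) (ω : Fin (y + 1) → ℝ) (n : ℕ) :
    steinhausF y ω n = ∏ i : Fin (y + 1), if Nat.Prime (i : ℕ) then
      Complex.exp (((2 * Real.pi * ω i * (padicValNat (i : ℕ) n : ℝ) : ℝ) : ℂ) * Complex.I)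
      else 1 := by
  unfold steinhausF
  refine Finset.prod_bij' (fun p _ => ⟨(p : ℕ), Finset.mem_range.mp p.2⟩)
    (fun i _ => ⟨(i : ℕ), Finset.mem_range.mpr i.2⟩) ?_ ?_ ?_ ?_ ?_ <;> simp

lemma steinhausF_one (y : ℕ) (ω : Fin (y + 1) → ℝ) : steinhausF y ω 1 = 1 := by
  simp [steinhausF_eq_prod]

lemma steinhausF_mul (y : ℕ) (ω : Fin (y + 1) → ℝ) {a b : ℕ} (ha : a ≠ 0) (hb : b ≠ 0) :
    steinhausF y ω (a * b) = steinhausF y ω a * steinhausF y ω b := by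
  rw [steinhausF_eq_prod, steinhausF_eq_prod, steinhausF_eq_prod, ← Finset.prod_mul_distrib]
  refine Finset.prod_congr rfl fun i _ => ?_
  split_ifs with hp
  · have : Fact (Nat.Prime (i : ℕ)) := ⟨hp⟩
    rw [padicValNat.mul ha hb, ← Complex.exp_add]
    push_cast
    ring_nf
  · simp

lemma steinhausF_prod (y : ℕ) (ω : Fin (y + 1) → ℝ) {ι : Type*} (s : Finset ι) (m : ι → ℕ)
    (hm : ∀ i ∈ s, m i ≠ 0) :
    steinhausF y ω (∏ i ∈ s, m i) = ∏ i ∈ s, steinhausF y ω (m i) := by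
  classical
  induction s using Finset.induction_on with
  | empty => simp [steinhausF_one]
  | insert a s ha ih =>
    rw [Finset.prod_insert ha, Finset.prod_insert ha, steinhausF_mul, ih]
    · exact fun i hi => hm i (Finset.mem_insert_of_mem hi)
    · exact hm a (Finset.mem_insert_self _ _)
    · exact Finset.prod_ne_zero_iff.mpr fun i hi => hm i (Finset.mem_insert_of_mem hi)

lemma integral_exp_two_pi_int (d : ℤ) :
    ∫ t in Set.Ioc (0 : ℝ) 1, Complex.exp (2 * Real.pi * d * Complex.I * t) =
      if d = 0 then 1 else 0 := by
  rw [← intervalIntegral.integral_of_le zero_le_one]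
  split_ifs with h
  · simp [h]
  · rw [integral_exp_mul_complex]
    · have : Complex.exp (2 * Real.pi * d * Complex.I * (1 : ℝ)) = 1 := by
        rw [Complex.exp_eq_one_iff]
        exact ⟨d, by push_cast; ring⟩
      rw [this]
      simp
    · simp [h, Real.pi_ne_zero]

lemma steinhausF_mul_conj (y : ℕ) (ω : Fin (y + 1) → ℝ) (a b : ℕ) :
    steinhausF y ω a * (starRingEnd ℂ) (steinhausF y ω b) =
      ∏ i : Fin (y + 1), if Nat.Prime (i : ℕ) then
        Complex.exp (2 * Real.pi * ((padicValNat i a - padicValNat i b : ℤ) : ℂ) *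
          Complex.I * ω i) else 1 := by
  rw [steinhausF_eq_prod, steinhausF_eq_prod, map_prod, ← Finset.prod_mul_distrib]
  refine Finset.prod_congr rfl fun i _ => ?_
  split_ifs with hp
  · rw [← Complex.exp_conj, ← Complex.exp_add]
    simp only [map_mul, map_natCast, map_ofNat, Complex.conj_I, Complex.conj_ofReal,
      Int.cast_sub, Int.cast_natCast, Complex.ofReal_mul, Complex.ofReal_ofNat, Complex.ofReal_natCast]
    ring_nf
  · simp

lemma integral_steinhausF_mul_conj (y : ℕ) {a b : ℕ} (ha : a ≠ 0) (hb : b ≠ 0)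
    (hay : ∀ p, p.Prime → p ∣ a → p ≤ y) (hby : ∀ p, p.Prime → p ∣ b → p ≤ y) :
    ∫ ω, steinhausF y ω a * (starRingEnd ℂ) (steinhausF y ω b) ∂(steinhausMeasure y) =
      if a = b then 1 else 0 := by
  simp_rw [steinhausF_mul_conj]
  unfold steinhausMeasure
  rw [integral_fintype_prod_eq_prod (𝕜 := ℂ) (fun (i : Fin (y + 1)) (t : ℝ) =>
    if Nat.Prime (i : ℕ) then
        Complex.exp (2 * Real.pi * ((padicValNat i a - padicValNat i b : ℤ) : ℂ) *
          Complex.I * t) else 1)]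
  have key : ∀ i : Fin (y + 1), (∫ t in Set.Ioc (0 : ℝ) 1, (if Nat.Prime (i : ℕ) then
        Complex.exp (2 * Real.pi * ((padicValNat i a - padicValNat i b : ℤ) : ℂ) *
          Complex.I * t) else 1)) =
      if Nat.Prime (i : ℕ) → padicValNat i a = padicValNat i b then 1 else 0 := by
    intro i
    by_cases hp : Nat.Prime (i : ℕ)
    · simp only [hp, if_true, true_imp_iff]
      rw [integral_exp_two_pi_int]
      simp only [sub_eq_zero, Nat.cast_inj]
    · simp [hp]
  simp_rw [key]
  rw [Finset.prod_ite_zero]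
  simp only [Finset.prod_const_one]
  congr 1
  simp only [Finset.mem_univ, true_imp_iff, eq_iff_iff]
  constructor
  · intro h
    refine Nat.eq_of_factorization_eq ha hb fun p => ?_
    by_cases hp : p.Prime
    · by_cases hpy : p ≤ y
      · have := h ⟨p, by omega⟩ hp
        simpa [Nat.factorization_def _ hp] using this
      · rw [Nat.factorization_eq_zero_of_not_dvd fun h => hpy (hay p hp h),
          Nat.factorization_eq_zero_of_not_dvd fun h => hpy (hby p hp h)]
    · simp [Nat.factorization_eq_zero_of_not_prime _ hp]
  · rintro rfl i _
    rfl

/-- Pairs of `k`-tuples from `(x, x + H]` with equal products. -/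
def equalProductPairs (k x H : ℕ) : Finset ((Fin k → ℕ) × (Fin k → ℕ)) :=
  {q ∈ (Fintype.piFinset fun _ => Finset.Ioc x (x + H)) ×ˢ
      (Fintype.piFinset fun _ => Finset.Ioc x (x + H)) | ∏ i, q.1 i = ∏ i, q.2 i}

lemma continuous_steinhausF (y n : ℕ) : Continuous fun ω => steinhausF y ω n := by
  simp_rw [steinhausF_eq_prod]
  refine continuous_finsetProd _ fun i _ => ?_
  split_ifs <;> fun_prop

lemma norm_steinhausF (y n : ℕ) (ω : Fin (y + 1) → ℝ) : ‖steinhausF y ω n‖ = 1 := by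
  rw [steinhausF_eq_prod, norm_prod]
  refine Finset.prod_eq_one fun i _ => ?_
  split_ifs
  · exact Complex.norm_exp_ofReal_mul_I _
  · simp

instance (y : ℕ) : IsFiniteMeasure (steinhausMeasure y) := by
  unfold steinhausMeasure
  infer_instance

lemma integral_norm_sum_steinhausF_pow (k x H : ℕ) :
    ∫ ω, ‖((Real.sqrt H : ℂ))⁻¹ *
            ∑ n ∈ Finset.Ioc x (x + H), steinhausF (x + H) ω n‖ ^ (2 * k)
          ∂(steinhausMeasure (x + H)) =
      ((equalProductPairs k x H).card : ℝ) / (H : ℝ) ^ k := by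
  set y := x + H with hy
  set I := Finset.Ioc x (x + H)
  set T := Fintype.piFinset fun _ : Fin k => I with hT
  have hz : ∀ z : ℂ, ((‖z‖ ^ (2 * k) : ℝ) : ℂ) = z ^ k * (starRingEnd ℂ) (z ^ k) := by
    intro z
    rw [Complex.mul_conj, Complex.normSq_eq_norm_sq, norm_pow, ← pow_mul, mul_comm k 2]
  have hpow : ∀ ω : Fin (y + 1) → ℝ, (∑ n ∈ I, steinhausF y ω n) ^ k =
      ∑ m ∈ T, steinhausF y ω (∏ i, m i) := by
    intro ω
    have := Finset.sum_prod_piFinset (ι := Fin k) I (fun _ n => steinhausF y ω n)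
    rw [Finset.prod_const, Finset.card_univ, Fintype.card_fin] at this
    rw [← this]
    refine Finset.sum_congr rfl fun m hm => (steinhausF_prod y ω _ _ fun i _ => ?_).symm
    have := Fintype.mem_piFinset.mp hm i
    rw [Finset.mem_Ioc] at this
    omega
  have hne : ∀ m ∈ T, ∏ i, m i ≠ 0 := fun m hm => Finset.prod_ne_zero_iff.mpr fun i _ => by
    have := Fintype.mem_piFinset.mp hm i
    rw [Finset.mem_Ioc] at this
    omega
  have hle : ∀ m ∈ T, ∀ p, p.Prime → p ∣ ∏ i, m i → p ≤ y := fun m hm p hp hd => by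
    obtain ⟨i, -, hi⟩ := (Prime.dvd_finsetProd_iff hp.prime _).mp hd
    have := Fintype.mem_piFinset.mp hm i
    rw [Finset.mem_Ioc] at this
    exact (Nat.le_of_dvd (by omega) hi).trans this.2
  have hint : ∀ a b, Integrable (fun ω => steinhausF y ω a * (starRingEnd ℂ) (steinhausF y ω b))
      (steinhausMeasure y) := by
    intro a b
    refine Integrable.of_bound (C := 1) ?_ ?_
    · exact ((continuous_steinhausF y a).mul
        (Complex.continuous_conj.comp (continuous_steinhausF y b))).aestronglyMeasurable
    · filter_upwards with ω
      simp [norm_steinhausF]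
  apply Complex.ofReal_injective
  rw [← integral_complex_ofReal]
  calc ∫ ω, (((‖((Real.sqrt H : ℂ))⁻¹ * ∑ n ∈ I, steinhausF y ω n‖ ^ (2 * k) : ℝ)) : ℂ)
        ∂(steinhausMeasure y)
      = ∫ ω, ((H : ℂ) ^ k)⁻¹ * ∑ q ∈ T ×ˢ T, steinhausF y ω (∏ i, q.1 i) *
          (starRingEnd ℂ) (steinhausF y ω (∏ i, q.2 i)) ∂(steinhausMeasure y) := by
        congr 1
        ext ω
        rw [norm_mul, mul_pow, Complex.ofReal_mul, hz (∑ n ∈ I, steinhausF y ω n), hpow,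
          map_sum, Finset.sum_mul_sum, ← Finset.sum_product']
        congr 1
        rw [norm_inv, Complex.norm_real, Real.norm_of_nonneg (Real.sqrt_nonneg _), inv_pow,
          pow_mul, Real.sq_sqrt (Nat.cast_nonneg _)]
        push_cast
        rfl
    _ = ((H : ℂ) ^ k)⁻¹ * ∑ q ∈ T ×ˢ T, if ∏ i, q.1 i = ∏ i, q.2 i then 1 else 0 := by
        rw [integral_const_mul, integral_finsetSum _ fun q _ => hint _ _]
        congr 1
        refine Finset.sum_congr rfl fun q hq => ?_
        rw [Finset.mem_product] at hq
        exact integral_steinhausF_mul_conj y (hne _ hq.1) (hne _ hq.2) (hle _ hq.1) (hle _ hq.2)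
    _ = _ := by
        rw [Finset.sum_boole]
        unfold equalProductPairs
        push_cast
        rw [div_eq_inv_mul]

/-- Functions on `ι` with values in `[1, N]`. -/
def box (ι : Type*) [Fintype ι] [DecidableEq ι] (N : ℕ) : Finset (ι → ℕ) :=
  Fintype.piFinset fun _ => Finset.Icc 1 N

/-- The harmonic sum `∑_{t ≤ N} 1 / t`. -/
noncomputable def harmonicSum (N : ℕ) : ℝ := ∑ t ∈ Finset.Icc 1 N, (t : ℝ)⁻¹

/-- The logarithmic weight of an integer tuple. -/
noncomputable def logWeight {ι : Type*} [Fintype ι] (g : ι → ℕ) : ℝ := ∏ i, (g i : ℝ)⁻¹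

open Classical in
/-- The total logarithmic weight of the tuples in the box satisfying `p`. -/
noncomputable def logMass {ι : Type*} [Fintype ι] [DecidableEq ι] (N : ℕ)
    (p : (ι → ℕ) → Prop) : ℝ :=
  ∑ g ∈ box ι N with p g, logWeight g

lemma logWeight_nonneg {ι : Type*} [Fintype ι] (g : ι → ℕ) : 0 ≤ logWeight g :=
  Finset.prod_nonneg fun _ _ => by positivity

lemma one_le_harmonicSum {N : ℕ} (hN : 1 ≤ N) : 1 ≤ harmonicSum N := by
  have := Finset.single_le_sum (f := fun t : ℕ => (t : ℝ)⁻¹) (fun _ _ => by positivity)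
    (Finset.mem_Icc.mpr ⟨le_rfl, hN⟩)
  simpa [harmonicSum] using this

section LogMass

variable {ι : Type*} [Fintype ι] [DecidableEq ι] {N : ℕ}

lemma mem_box {g : ι → ℕ} : g ∈ box ι N ↔ ∀ i, 1 ≤ g i ∧ g i ≤ N := by
  simp [box]

lemma sum_logWeight :
    ∑ g ∈ box ι N, logWeight g = harmonicSum N ^ Fintype.card ι := by
  have := Finset.sum_prod_piFinset (ι := ι) (Finset.Icc 1 N) (fun _ t => (t : ℝ)⁻¹)
  rw [Finset.prod_const, Finset.card_univ] at this
  exact this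

lemma logMass_nonneg (p : (ι → ℕ) → Prop) : 0 ≤ logMass N p :=
  Finset.sum_nonneg fun _ _ => logWeight_nonneg _

open Classical in
lemma logMass_le (p : (ι → ℕ) → Prop) : logMass N p ≤ harmonicSum N ^ Fintype.card ι := by
  rw [← sum_logWeight]
  exact Finset.sum_le_sum_of_subset_of_nonneg (Finset.filter_subset _ _)
    fun _ _ _ => logWeight_nonneg _

lemma logMass_mono {p q : (ι → ℕ) → Prop} (h : ∀ g, (∀ i, 1 ≤ g i) → p g → q g) :
    logMass N p ≤ logMass N q := by
  classical
  refine Finset.sum_le_sum_of_subset_of_nonneg (fun g hg => ?_) fun _ _ _ => logWeight_nonneg _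
  rw [Finset.mem_filter] at hg ⊢
  exact ⟨hg.1, h g (fun i => (mem_box.mp hg.1 i).1) hg.2⟩

open Classical in
/-- Averaging over one coordinate. -/
lemma harmonicSum_mul_logMass (v : ι) (p : (ι → ℕ) → Prop) :
    harmonicSum N * logMass N p = ∑ g ∈ box ι N, logWeight g *
      ∑ t ∈ Finset.Icc 1 N with p (Function.update g v t), (t : ℝ)⁻¹ := by
  have hR : ∀ g ∈ box ι N, logWeight g *
      ∑ t ∈ Finset.Icc 1 N with p (Function.update g v t), (t : ℝ)⁻¹ =
      ∑ t ∈ Finset.Icc 1 N, if p (Function.update g v t) then logWeight g * (t : ℝ)⁻¹ else 0 := by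
    intro g _
    rw [Finset.sum_filter, Finset.mul_sum]
    exact Finset.sum_congr rfl fun t _ => by split_ifs <;> simp
  rw [Finset.sum_congr rfl hR, ← Finset.sum_product']
  unfold harmonicSum logMass
  rw [mul_comm, Finset.sum_filter, Finset.sum_mul_sum, ← Finset.sum_product']
  refine Finset.sum_bij' (fun q _ => (Function.update q.1 v q.2, q.1 v))
    (fun q _ => (Function.update q.1 v q.2, q.1 v)) ?_ ?_ ?_ ?_ ?_
  · rintro ⟨g, t⟩ h
    simp only [Finset.mem_product, mem_box, Finset.mem_Icc] at h ⊢
    refine ⟨fun i => ?_, h.1 v⟩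
    by_cases hi : i = v
    · subst hi; simpa using h.2
    · simpa [hi] using h.1 i
  · rintro ⟨g, t⟩ h
    simp only [Finset.mem_product, mem_box, Finset.mem_Icc] at h ⊢
    refine ⟨fun i => ?_, h.1 v⟩
    by_cases hi : i = v
    · subst hi; simpa using h.2
    · simpa [hi] using h.1 i
  · rintro ⟨g, t⟩ _
    simp
  · rintro ⟨g, t⟩ _
    simp
  · rintro ⟨g, t⟩ _
    simp only [Function.update_idem, Function.update_eq_self]
    have : logWeight (Function.update g v t) * (g v : ℝ)⁻¹ = logWeight g * (t : ℝ)⁻¹ := by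
      unfold logWeight
      rw [← Finset.mul_prod_erase _ _ (Finset.mem_univ v),
        ← Finset.mul_prod_erase _ (fun i => (g i : ℝ)⁻¹) (Finset.mem_univ v)]
      rw [Finset.prod_congr rfl (g := fun i => (g i : ℝ)⁻¹) fun i hi => by
        rw [Function.update_of_ne (Finset.ne_of_mem_erase hi)]]
      simp
      ring
    split_ifs
    · exact this.symm
    · simp

open Classical in
/-- If `P` restricts the coordinate `v` to a set of logarithmic mass at most `B`, and `G` does not
depend on `v`, then imposing `P` on top of `G` costs a factor `B`. -/
lemma logMass_and_le (hN : 1 ≤ N) (v : ι) {G P : (ι → ℕ) → Prop} {B : ℝ}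
    (hG : ∀ g t, G (Function.update g v t) ↔ G g)
    (hP : ∀ g, (∀ i, 1 ≤ g i) →
      ∑ t ∈ Finset.Icc 1 N with P (Function.update g v t), (t : ℝ)⁻¹ ≤ B) :
    logMass N (fun g => G g ∧ P g) ≤ B * logMass N G := by
  have h1 : harmonicSum N * logMass N (fun g => G g ∧ P g) ≤ B * logMass N G := by
    rw [harmonicSum_mul_logMass v]
    unfold logMass
    rw [Finset.mul_sum, Finset.sum_filter]
    refine Finset.sum_le_sum fun g hg => ?_
    simp only [hG]
    split_ifs with h
    · simp only [h, true_and]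
      rw [mul_comm]
      exact mul_le_mul_of_nonneg_right (hP g fun i => (mem_box.mp hg i).1) (logWeight_nonneg g)
    · simp [h]
  exact (le_mul_of_one_le_left (logMass_nonneg _) (one_le_harmonicSum hN)).trans h1

end LogMass

/-- The product of `g` along the line `l` lies in `(x, x + H]`, and the entry of `g` at `v` is at
least `x / H`. -/
def LineCond {ι : Type*} (x H : ℕ) (l : Finset ι) (v : ι) (g : ι → ℕ) : Prop :=
  (x < ∏ u ∈ l, g u ∧ ∏ u ∈ l, g u ≤ x + H) ∧ x ≤ H * g v

lemma lineCond_update_iff {ι : Type*} [DecidableEq ι] {x H : ℕ} {l : Finset ι} {v w : ι}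
    (hv : v ∈ l) (hw : w ∉ l) (g : ι → ℕ) (t : ℕ) :
    LineCond x H l v (Function.update g w t) ↔ LineCond x H l v g := by
  unfold LineCond
  rw [Finset.prod_update_of_notMem hw, Function.update_of_ne (ne_of_mem_of_not_mem hv hw)]

open Classical in
lemma sum_lineCond_le {ι : Type*} [DecidableEq ι] {x H N : ℕ} (hx : 1 ≤ x) (hHx : H ≤ x)
    {l : Finset ι} {v : ι} (hv : v ∈ l) (g : ι → ℕ) (hg : ∀ i, 1 ≤ g i) :
    ∑ t ∈ Finset.Icc 1 N with LineCond x H l v (Function.update g v t), (t : ℝ)⁻¹ ≤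
      3 * H / x := by
  set r := ∏ u ∈ l \ {v}, g u with hr
  have hr1 : 1 ≤ r := Finset.one_le_prod' fun i _ => hg i
  have hL : ∀ t, LineCond x H l v (Function.update g v t) ↔
      (x < t * r ∧ t * r ≤ x + H) ∧ x ≤ H * t := by
    intro t
    unfold LineCond
    rw [Finset.prod_update_of_mem hv, Function.update_self]
  simp only [hL]
  set S := {t ∈ Finset.Icc 1 N | (x < t * r ∧ t * r ≤ x + H) ∧ x ≤ H * t} with hS
  have hxR : (0 : ℝ) < x := by exact_mod_cast hx
  have hrR : (0 : ℝ) < r := by exact_mod_cast hr1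
  rcases S.eq_empty_or_nonempty with hE | ⟨t, ht⟩
  · rw [hE]
    simp only [Finset.sum_empty]
    positivity
  have hr2 : r ≤ 2 * H := by
    rw [hS, Finset.mem_filter, Finset.mem_Icc] at ht
    have : t * r ≤ t * (2 * H) := by nlinarith
    exact Nat.le_of_mul_le_mul_left this (by omega)
  have hcard : S.card * r ≤ H + r := by
    have hsub : S ⊆ Finset.Ioc (x / r) ((x + H) / r) := by
      intro t ht
      rw [hS, Finset.mem_filter] at ht
      rw [Finset.mem_Ioc, Nat.div_lt_iff_lt_mul (by omega), Nat.le_div_iff_mul_le (by omega)]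
      exact ht.2.1
    have h1 := Finset.card_le_card hsub
    rw [Nat.card_Ioc] at h1
    have h2 := Nat.div_mul_le_self (x + H) r
    have h3 := Nat.lt_div_mul_add (a := x) (show 0 < r by omega)
    have h4 : S.card * r ≤ ((x + H) / r - x / r) * r := Nat.mul_le_mul_right _ h1
    rw [Nat.sub_mul] at h4
    omega
  have hterm : ∀ t ∈ S, (t : ℝ)⁻¹ ≤ r / x := by
    intro t ht
    rw [hS, Finset.mem_filter, Finset.mem_Icc] at ht
    have h0 : (0 : ℝ) < t := by exact_mod_cast ht.1.1
    have h1 : (x : ℝ) ≤ t * r := by exact_mod_cast ht.2.1.1.le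
    rw [inv_le_iff_one_le_mul₀ h0, div_mul_eq_mul_div, le_div_iff₀ hxR]
    linarith
  calc ∑ t ∈ S, (t : ℝ)⁻¹ ≤ S.card • ((r : ℝ) / x) := Finset.sum_le_card_nsmul _ _ _ hterm
    _ = ((S.card * r : ℕ) : ℝ) / x := by rw [nsmul_eq_mul]; push_cast; ring
    _ ≤ ((H + r : ℕ) : ℝ) / x := by gcongr
    _ ≤ 3 * H / x := by
        gcongr
        have : H + r ≤ 3 * H := by omega
        exact_mod_cast this

lemma exists_prod_dvd_of_dvd_prod {ι : Type*} (s : Finset ι) (b : ι → ℕ) {a : ℕ} (ha : a ≠ 0)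
    (h : a ∣ ∏ j ∈ s, b j) : ∃ d : ι → ℕ, (∀ j ∈ s, d j ∣ b j) ∧ ∏ j ∈ s, d j = a := by
  classical
  induction s using Finset.induction_on generalizing a with
  | empty => exact ⟨fun _ => 1, by simp, by simpa [eq_comm] using h⟩
  | insert j s hj ih =>
    rw [Finset.prod_insert hj] at h
    obtain ⟨a₁, a₂, h₁, h₂, rfl⟩ := exists_dvd_and_dvd_of_dvd_mul h
    obtain ⟨d, hd, hd'⟩ := ih (right_ne_zero_of_mul ha) h₂
    refine ⟨Function.update d j a₁, fun i hi => ?_, ?_⟩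
    · by_cases hij : i = j
      · subst hij; simpa using h₁
      · simpa [hij] using hd i (Finset.mem_of_mem_insert_of_ne hi hij)
    · rw [Finset.prod_insert hj, Finset.prod_update_of_notMem hj, hd', Function.update_self]

/-- Two factorizations of the same integer have a common refinement. -/
lemma exists_matrix_of_prod_eq {l : ℕ} (k : ℕ) (a : Fin k → ℕ) (b : Fin l → ℕ)
    (ha : ∀ i, a i ≠ 0) (hb : ∀ j, b j ≠ 0) (h : ∏ i, a i = ∏ j, b j) :
    ∃ g : Fin k → Fin l → ℕ, (∀ i, ∏ j, g i j = a i) ∧ ∀ j, ∏ i, g i j = b j := by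
  induction k generalizing b with
  | zero =>
    refine ⟨fun i => i.elim0, fun i => i.elim0, fun j => ?_⟩
    rw [Finset.univ_eq_empty, Finset.prod_empty] at h ⊢
    exact (Finset.prod_eq_one_iff.mp h.symm j (Finset.mem_univ j)).symm
  | succ k ih =>
    rw [Fin.prod_univ_succ] at h
    obtain ⟨d, hd, hd'⟩ := exists_prod_dvd_of_dvd_prod Finset.univ b (ha 0)
      (h ▸ dvd_mul_right _ _)
    choose c hc using fun j => hd j (Finset.mem_univ j)
    have hc0 : ∀ j, c j ≠ 0 := fun j hj => hb j (by rw [hc, hj, mul_zero])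
    obtain ⟨g, hg, hg'⟩ := ih (fun i => a i.succ) c (fun i => ha _) hc0 (by
      have h2 : ∏ j, b j = a 0 * ∏ j, c j := by
        rw [← hd', ← Finset.prod_mul_distrib]
        exact Finset.prod_congr rfl fun j _ => hc j
      exact Nat.eq_of_mul_eq_mul_left (Nat.pos_of_ne_zero (ha 0)) (h.trans h2))
    refine ⟨Fin.cons d g, fun i => ?_, fun j => ?_⟩
    · refine Fin.cases ?_ (fun i => ?_) i
      · simpa using hd'
      · simpa using hg i
    · rw [Fin.prod_univ_succ]
      simp [hg', ← hc]

/-- Distinct integers `r`, `c` at relative distance at most `H / x`. -/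
def RelClose (x H r c : ℕ) : Prop :=
  r ≠ c ∧ (c ≤ r + H * r / x ∧ r ≤ c + H * r / x) ∧ (r ≤ c + H * c / x ∧ c ≤ r + H * c / x)

lemma RelClose.symm {x H r c : ℕ} (h : RelClose x H r c) : RelClose x H c r :=
  ⟨h.1.symm, h.2.2, h.2.1⟩

open Classical in
lemma card_relClose_le (x H r : ℕ) (R : Finset ℕ) :
    (({c ∈ R | RelClose x H r c}.card : ℕ) : ℝ) ≤ 2 * (H * r / x) := by
  have hsub : {c ∈ R | RelClose x H r c} ⊆
      (Finset.Icc (r - H * r / x) (r + H * r / x)).erase r := by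
    intro c hc
    obtain ⟨-, h1, h2, -⟩ := Finset.mem_filter.mp hc
    rw [Finset.mem_erase, Finset.mem_Icc]
    exact ⟨h1.symm, by omega, by omega⟩
  have h1 := Finset.card_le_card hsub
  rw [Finset.card_erase_of_mem (Finset.mem_Icc.mpr ⟨Nat.sub_le _ _, Nat.le_add_right _ _⟩),
    Nat.card_Icc] at h1
  have h2 : ({c ∈ R | RelClose x H r c}).card ≤ 2 * (H * r / x) := by omega
  have h3 : ((H * r / x : ℕ) : ℝ) ≤ (H * r : ℕ) / x := Nat.cast_div_le
  calc (({c ∈ R | RelClose x H r c}.card : ℕ) : ℝ) ≤ ((2 * (H * r / x) : ℕ) : ℝ) := by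
        exact_mod_cast h2
    _ ≤ _ := by push_cast at h3 ⊢; linarith

lemma logWeight_eq_inv {ι : Type*} [Fintype ι] (g : ι → ℕ) :
    logWeight g = ((∏ i, g i : ℕ) : ℝ)⁻¹ := by
  simp [logWeight]

lemma sum_logWeight_le_logMass {k N : ℕ} (S : Finset ((Fin k → ℕ) × (Fin k → ℕ)))
    (hS : ∀ q ∈ S, (q.1 ∈ box (Fin k) N ∧ q.2 ∈ box (Fin k) N) ∧ ∏ i, q.1 i = ∏ i, q.2 i)
    (p : (Fin k × Fin k → ℕ) → Prop)
    (hp : ∀ q ∈ S, ∀ g : Fin k × Fin k → ℕ, (∀ u, 1 ≤ g u) → (∀ i, ∏ j, g (i, j) = q.1 i) →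
      (∀ j, ∏ i, g (i, j) = q.2 j) → p g) :
    ∑ q ∈ S, logWeight q.1 ≤ logMass N p := by
  classical
  have hex : ∀ q ∈ S, ∃ g : Fin k × Fin k → ℕ, (∀ i, ∏ j, g (i, j) = q.1 i) ∧
      (∀ j, ∏ i, g (i, j) = q.2 j) := by
    intro q hq
    obtain ⟨⟨h1, h2⟩, h3⟩ := hS q hq
    rw [mem_box] at h1 h2
    obtain ⟨g, hg⟩ := exists_matrix_of_prod_eq k q.1 q.2
      (fun i => by have := h1 i; omega) (fun i => by have := h2 i; omega) h3
    exact ⟨fun u => g u.1 u.2, hg⟩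
  choose! φ hφ hφ' using hex
  have hpos : ∀ q ∈ S, ∀ u, 1 ≤ φ q u ∧ φ q u ≤ N := by
    rintro q hq ⟨i, j⟩
    have h1 := mem_box.mp (hS q hq).1.1 i
    have hd : φ q (i, j) ∣ q.1 i := hφ q hq i ▸ Finset.dvd_prod_of_mem _ (Finset.mem_univ j)
    exact ⟨Nat.pos_of_dvd_of_pos hd h1.1, (Nat.le_of_dvd h1.1 hd).trans h1.2⟩
  have hinj : Set.InjOn φ S := by
    intro q hq q' hq' h
    refine Prod.ext (funext fun i => ?_) (funext fun i => ?_)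
    · rw [← hφ q hq, ← hφ q' hq', h]
    · rw [← hφ' q hq, ← hφ' q' hq', h]
  have hw : ∀ q ∈ S, logWeight q.1 = logWeight (φ q) := by
    intro q hq
    rw [logWeight_eq_inv, logWeight_eq_inv, Fintype.prod_prod_type]
    simp only [hφ q hq]
  rw [Finset.sum_congr rfl hw, ← Finset.sum_image hinj]
  refine Finset.sum_le_sum_of_subset_of_nonneg (fun g hg => ?_) fun _ _ _ => logWeight_nonneg _
  obtain ⟨q, hq, rfl⟩ := Finset.mem_image.mp hg
  rw [Finset.mem_filter]
  exact ⟨mem_box.mpr (hpos q hq), hp q hq _ (fun u => (hpos q hq u).1) (hφ q hq) (hφ' q hq)⟩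

open Classical in
lemma sum_relClose_le (k N x H : ℕ) :
    ∑ q ∈ box (Fin k) N ×ˢ box (Fin k) N with RelClose x H (∏ i, q.1 i) (∏ i, q.2 i),
      logWeight q.1 * logWeight q.2 ≤ 2 * (H / x) * harmonicSum N ^ (k * k) := by
  set D : ℕ → ℕ := fun r => {α ∈ box (Fin k) N | ∏ i, α i = r}.card with hD
  set R := (box (Fin k) N).image fun α => ∏ i, α i with hR
  have hcomp : ∀ F : ℕ → ℝ, ∑ α ∈ box (Fin k) N, F (∏ i, α i) = ∑ r ∈ R, D r * F r := by
    intro F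
    rw [Finset.sum_comp F fun α : Fin k → ℕ => ∏ i, α i]
    simp only [nsmul_eq_mul, hD, hR]
  set u : ℕ → ℝ := fun r => D r * (r : ℝ)⁻¹ with hu
  have hsym : ∑ r ∈ R, ∑ c ∈ R, (if RelClose x H r c then u c ^ 2 else 0) =
      ∑ r ∈ R, ∑ c ∈ R, (if RelClose x H r c then u r ^ 2 else 0) := by
    rw [Finset.sum_comm]
    refine Finset.sum_congr rfl fun r _ => Finset.sum_congr rfl fun c _ => ?_
    exact if_congr ⟨RelClose.symm, RelClose.symm⟩ rfl rfl
  have hdiag : ∑ r ∈ R, (D r : ℝ) ^ 2 * (r : ℝ)⁻¹ ≤ harmonicSum N ^ (k * k) := by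
    have h1 : ∑ r ∈ R, (D r : ℝ) ^ 2 * (r : ℝ)⁻¹ =
        ∑ α ∈ box (Fin k) N, D (∏ i, α i) * ((∏ i, α i : ℕ) : ℝ)⁻¹ := by
      rw [hcomp fun r => D r * (r : ℝ)⁻¹]
      exact Finset.sum_congr rfl fun r _ => by ring
    have h2 : ∑ α ∈ box (Fin k) N, D (∏ i, α i) * ((∏ i, α i : ℕ) : ℝ)⁻¹ =
        ∑ q ∈ box (Fin k) N ×ˢ box (Fin k) N with ∏ i, q.1 i = ∏ i, q.2 i, logWeight q.1 := by
      rw [Finset.sum_filter, Finset.sum_product]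
      refine Finset.sum_congr rfl fun α _ => ?_
      rw [← Finset.sum_filter]
      simp only [Finset.sum_const, nsmul_eq_mul, logWeight_eq_inv, hD, eq_comm]
    rw [h1, h2]
    refine (sum_logWeight_le_logMass (N := N) _ (fun q hq => ?_) (fun _ => True)
      fun _ _ _ _ _ _ => trivial).trans ((logMass_le _).trans_eq (by simp))
    rw [Finset.mem_filter, Finset.mem_product] at hq
    exact hq
  calc ∑ q ∈ box (Fin k) N ×ˢ box (Fin k) N with RelClose x H (∏ i, q.1 i) (∏ i, q.2 i),
        logWeight q.1 * logWeight q.2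
      = ∑ α ∈ box (Fin k) N, ∑ β ∈ box (Fin k) N,
          if RelClose x H (∏ i, α i) (∏ i, β i) then
            ((∏ i, α i : ℕ) : ℝ)⁻¹ * ((∏ i, β i : ℕ) : ℝ)⁻¹ else 0 := by
        rw [Finset.sum_filter, Finset.sum_product]
        simp only [logWeight_eq_inv]
    _ = ∑ r ∈ R, ∑ c ∈ R, if RelClose x H r c then u r * u c else 0 := by
        rw [hcomp fun r => ∑ β ∈ box (Fin k) N, if RelClose x H r (∏ i, β i) then
            (r : ℝ)⁻¹ * ((∏ i, β i : ℕ) : ℝ)⁻¹ else 0]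
        refine Finset.sum_congr rfl fun r _ => ?_
        rw [hcomp fun c => if RelClose x H r c then (r : ℝ)⁻¹ * (c : ℝ)⁻¹ else 0, Finset.mul_sum]
        refine Finset.sum_congr rfl fun c _ => ?_
        split_ifs
        · simp only [hu]; ring
        · simp
    _ ≤ ∑ r ∈ R, ∑ c ∈ R, ((if RelClose x H r c then u r ^ 2 else 0) / 2 +
          (if RelClose x H r c then u c ^ 2 else 0) / 2) := by
        refine Finset.sum_le_sum fun r _ => Finset.sum_le_sum fun c _ => ?_
        split_ifs
        · nlinarith [sq_nonneg (u r - u c)]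
        · simp
    _ = ∑ r ∈ R, ∑ c ∈ R, (if RelClose x H r c then u r ^ 2 else 0) := by
        simp only [Finset.sum_add_distrib, ← Finset.sum_div]
        rw [hsym]
        ring
    _ ≤ ∑ r ∈ R, 2 * (H / x) * ((D r : ℝ) ^ 2 * (r : ℝ)⁻¹) := by
        refine Finset.sum_le_sum fun r _ => ?_
        rw [← Finset.sum_filter, Finset.sum_const, nsmul_eq_mul]
        refine (mul_le_mul_of_nonneg_right (card_relClose_le x H r R) (sq_nonneg _)).trans_eq ?_
        simp only [hu]
        rcases eq_or_ne (r : ℝ) 0 with h | h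
        · simp [h]
        · field_simp
    _ ≤ _ := by
        rw [← Finset.mul_sum]
        exact mul_le_mul_of_nonneg_left hdiag (by positivity)

lemma mul_prod_ite_eq_prod {k : ℕ} (f : Fin k → ℕ) (a : Fin k) :
    f a * ∏ i, (if i = a then 1 else f i) = ∏ i, f i := by
  have : ∀ i, f i = (if i = a then f a else 1) * (if i = a then 1 else f i) := by
    intro i; split_ifs with h <;> simp [h]
  rw [Finset.prod_congr rfl fun i _ => this i, Finset.prod_mul_distrib]
  simp

/-- The products of the off-centre entries of row `v.1` and of column `v.2` are distinct and
relatively close. -/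
def CrossClose {k : ℕ} (x H : ℕ) (v : Fin k × Fin k) (g : Fin k × Fin k → ℕ) : Prop :=
  RelClose x H (∏ j, if j = v.2 then 1 else g (v.1, j)) (∏ i, if i = v.1 then 1 else g (i, v.2))

lemma logMass_crossClose_le {k N : ℕ} (hN : 1 ≤ N) (x H : ℕ) (v : Fin k × Fin k) :
    logMass N (CrossClose x H v) ≤ 2 * (H / x) * harmonicSum N ^ (2 * k ^ 2) := by
  classical
  obtain ⟨a, b⟩ := v
  let α : (Fin k × Fin k → ℕ) → Fin k → ℕ := fun g j => if j = b then 1 else g (a, j)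
  let β : (Fin k × Fin k → ℕ) → Fin k → ℕ := fun g i => if i = a then 1 else g (i, b)
  let ρ : (Fin k × Fin k → ℕ) → Fin k × Fin k → ℕ := fun g u =>
    if u.1 = a ∧ u.2 ≠ b ∨ u.1 ≠ a ∧ u.2 = b then 1 else g u
  let Φ : (Fin k × Fin k → ℕ) → (Fin k × Fin k → ℕ) × (Fin k → ℕ) × (Fin k → ℕ) :=
    fun g => (ρ g, α g, β g)
  have hinj : Function.Injective Φ := by
    intro g g' h
    simp only [Φ, Prod.mk.injEq] at h
    obtain ⟨h1, h2, h3⟩ := h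
    ext ⟨i, j⟩
    have h1' := congrFun h1 (i, j)
    have h2' := congrFun h2 j
    have h3' := congrFun h3 i
    simp only [ρ, α, β] at h1' h2' h3'
    by_cases hi : i = a <;> by_cases hj : j = b <;> simp_all
  have hw : ∀ g, logWeight g = logWeight (ρ g) * (logWeight (α g) * logWeight (β g)) := by
    intro g
    have hpt : ∀ i j, ((g (i, j) : ℕ) : ℝ)⁻¹ = ((ρ g (i, j) : ℕ) : ℝ)⁻¹ *
        ((if i = a then ((α g j : ℕ) : ℝ)⁻¹ else 1) *
          (if j = b then ((β g i : ℕ) : ℝ)⁻¹ else 1)) := by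
      intro i j
      simp only [ρ, α, β]
      by_cases hi : i = a <;> by_cases hj : j = b <;> simp [hi, hj]
    unfold logWeight
    rw [Fintype.prod_prod_type, Fintype.prod_prod_type]
    simp only [hpt, Finset.prod_mul_distrib]
    congr 2
    · rw [Finset.prod_comm]
      simp
    · simp
  unfold logMass
  rw [Finset.sum_congr rfl fun g _ => hw g]
  have hsum := Finset.sum_image (s := {g ∈ box (Fin k × Fin k) N | CrossClose x H (a, b) g})
    (f := fun z : (Fin k × Fin k → ℕ) × (Fin k → ℕ) × (Fin k → ℕ) =>
      logWeight z.1 * (logWeight z.2.1 * logWeight z.2.2)) (g := Φ) hinj.injOn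
  have hsub : ({g ∈ box (Fin k × Fin k) N | CrossClose x H (a, b) g}).image Φ ⊆
      box (Fin k × Fin k) N ×ˢ {q ∈ box (Fin k) N ×ˢ box (Fin k) N |
        RelClose x H (∏ i, q.1 i) (∏ i, q.2 i)} := by
    intro z hz
    obtain ⟨g, hg, rfl⟩ := Finset.mem_image.mp hz
    rw [Finset.mem_filter] at hg
    have hb := mem_box.mp hg.1
    simp only [Φ, Finset.mem_product, Finset.mem_filter, mem_box]
    refine ⟨fun u => ?_, ⟨fun j => ?_, fun i => ?_⟩, hg.2⟩
    · simp only [ρ]; split_ifs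
      · omega
      · exact hb u
    · simp only [α]; split_ifs
      · omega
      · exact hb _
    · simp only [β]; split_ifs
      · omega
      · exact hb _
  have h2 := Finset.sum_le_sum_of_subset_of_nonneg hsub
    (f := fun z : (Fin k × Fin k → ℕ) × (Fin k → ℕ) × (Fin k → ℕ) =>
      logWeight z.1 * (logWeight z.2.1 * logWeight z.2.2)) fun z _ _ =>
      mul_nonneg (logWeight_nonneg _) (mul_nonneg (logWeight_nonneg _) (logWeight_nonneg _))
  rw [hsum, Finset.sum_product] at h2
  simp only [← Finset.mul_sum, ← Finset.sum_mul] at h2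
  rw [sum_logWeight] at h2
  have h3 := sum_relClose_le k N x H
  have hL := one_le_harmonicSum hN
  calc _ ≤ _ := h2
    _ ≤ harmonicSum N ^ Fintype.card (Fin k × Fin k) *
        (2 * (H / x) * harmonicSum N ^ (k * k)) := by gcongr
    _ = _ := by
      rw [Fintype.card_prod, Fintype.card_fin]
      ring

section MatrixCount

variable {k N x H : ℕ}

/-- Row `i` of a `k × k` matrix. -/
def row (i : Fin k) : Finset (Fin k × Fin k) := {i} ×ˢ Finset.univ

/-- Column `j` of a `k × k` matrix. -/
def col (j : Fin k) : Finset (Fin k × Fin k) := Finset.univ ×ˢ {j}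

lemma mem_row {i : Fin k} {u : Fin k × Fin k} : u ∈ row i ↔ u.1 = i := by
  rw [row, Finset.mem_product]
  simp

lemma mem_col {j : Fin k} {u : Fin k × Fin k} : u ∈ col j ↔ u.2 = j := by
  rw [col, Finset.mem_product]
  simp

lemma prod_row (i : Fin k) (g : Fin k × Fin k → ℕ) : ∏ u ∈ row i, g u = ∏ j, g (i, j) := by
  simp [row]

lemma prod_col (j : Fin k) (g : Fin k × Fin k → ℕ) : ∏ u ∈ col j, g u = ∏ i, g (i, j) := by
  simp [col]

lemma logMass_and_rows_le (hN : 1 ≤ N) (hx : 1 ≤ x) (hHx : H ≤ x) (σ : Fin k → Fin k)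
    (s : Finset (Fin k)) {G : (Fin k × Fin k → ℕ) → Prop}
    (hG : ∀ i ∈ s, ∀ g t, G (Function.update g (i, σ i) t) ↔ G g) :
    logMass N (fun g => G g ∧ ∀ i ∈ s, LineCond x H (row i) (i, σ i) g) ≤
      (3 * H / x : ℝ) ^ s.card * logMass N G := by
  classical
  induction s using Finset.induction_on with
  | empty => simp
  | insert a s ha ih =>
    have h1 := logMass_and_le hN (a, σ a)
      (G := fun g => G g ∧ ∀ i ∈ s, LineCond x H (row i) (i, σ i) g)
      (P := LineCond x H (row a) (a, σ a)) (B := 3 * H / x)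
      (fun g t => and_congr (hG a (Finset.mem_insert_self _ _) g t)
        (forall₂_congr fun i hi => lineCond_update_iff (v := (i, σ i)) (w := (a, σ a))
          (mem_row.mpr rfl) (fun h => ha ((show a = i from mem_row.mp h).symm ▸ hi)) g t))
      (sum_lineCond_le hx hHx (mem_row.mpr rfl))
    have h2 := ih fun i hi => hG i (Finset.mem_insert_of_mem hi)
    rw [Finset.card_insert_of_notMem ha, pow_succ', mul_assoc]
    refine le_trans (logMass_mono fun g _ h => ?_)
      (h1.trans (mul_le_mul_of_nonneg_left h2 (by positivity)))
    exact ⟨⟨h.1, fun i hi => h.2 i (Finset.mem_insert_of_mem hi)⟩,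
      h.2 a (Finset.mem_insert_self _ _)⟩

/-- All rows satisfy the line condition, and so does column `b` at an entry of row `a` other than
the distinguished one. -/
lemma logMass_rows_and_col_le (hN : 1 ≤ N) (hx : 1 ≤ x) (hHx : H ≤ x) (σ : Fin k → Fin k)
    (a b : Fin k) (hb : b ≠ σ a) :
    logMass N (fun g => (∀ i, LineCond x H (row i) (i, σ i) g) ∧ LineCond x H (col b) (a, b) g) ≤
      (3 * H / x : ℝ) ^ (k + 1) * harmonicSum N ^ (k ^ 2) := by
  classical
  have hk : 0 < k := a.pos
  set s := Finset.univ.erase a with hs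
  set G := fun g => ∀ i ∈ s, LineCond x H (row i) (i, σ i) g with hGdef
  have h0 : logMass N G ≤ (3 * H / x : ℝ) ^ s.card * logMass N fun _ : Fin k × Fin k → ℕ => True :=
    le_trans (logMass_mono fun g _ h => ⟨trivial, h⟩)
      (logMass_and_rows_le hN hx hHx σ s fun _ _ _ _ => Iff.rfl)
  have hrow : ∀ g t c, G (Function.update g (a, c) t) ↔ G g := fun g t c =>
    forall₂_congr fun i hi => lineCond_update_iff (v := (i, σ i)) (mem_row.mpr rfl)
      (fun h => Finset.ne_of_mem_erase hi (mem_row.mp h : a = i).symm) g t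
  have h1 := logMass_and_le hN (a, b) (G := G) (P := LineCond x H (col b) (a, b))
    (B := 3 * H / x) (fun g t => hrow g t b)
    (sum_lineCond_le hx hHx (mem_col.mpr rfl))
  have h2 := logMass_and_le hN (a, σ a) (G := fun g => G g ∧ LineCond x H (col b) (a, b) g)
    (P := LineCond x H (row a) (a, σ a)) (B := 3 * H / x)
    (fun g t => and_congr (hrow g t (σ a))
      (lineCond_update_iff (v := (a, b)) (w := (a, σ a)) (mem_col.mpr rfl)
        (fun h => hb (show σ a = b from mem_col.mp h).symm) g t))
    (sum_lineCond_le hx hHx (mem_row.mpr rfl))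
  have hB : (0 : ℝ) ≤ 3 * H / x := by positivity
  have hcard : s.card + 2 = k + 1 := by
    rw [hs, Finset.card_erase_of_mem (Finset.mem_univ _), Finset.card_univ, Fintype.card_fin]
    omega
  calc _ ≤ _ := logMass_mono fun g _ h => ⟨⟨fun i _ => h.1 i, h.2⟩, h.1 a⟩
    _ ≤ _ := h2
    _ ≤ 3 * H / x * (3 * H / x * ((3 * H / x : ℝ) ^ s.card *
          harmonicSum N ^ Fintype.card (Fin k × Fin k))) :=
        mul_le_mul_of_nonneg_left (h1.trans (mul_le_mul_of_nonneg_left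
          (h0.trans (mul_le_mul_of_nonneg_left (logMass_le _) (by positivity))) hB)) hB
    _ = _ := by
        rw [← hcard, Fintype.card_prod, Fintype.card_fin]
        ring

/-- All rows satisfy the line condition at the entries of a permutation matrix, and one cross
centred at such an entry has close arms. -/
lemma logMass_rows_and_cross_le (hN : 1 ≤ N) (hx : 1 ≤ x) (hHx : H ≤ x) (σ : Fin k → Fin k)
    (hσ : Function.Injective σ) (a : Fin k) :
    logMass N (fun g => (∀ i, LineCond x H (row i) (i, σ i) g) ∧ CrossClose x H (a, σ a) g) ≤
      (3 * H / x : ℝ) ^ (k + 1) * harmonicSum N ^ (2 * k ^ 2) := by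
  have h0 := logMass_and_rows_le hN hx hHx σ Finset.univ (G := CrossClose x H (a, σ a))
    (fun i _ g t => by
      unfold CrossClose
      have e1 : ∀ j, (if j = σ a then 1 else Function.update g (i, σ i) t (a, j)) =
          if j = σ a then 1 else g (a, j) := by
        intro j
        split_ifs with h
        · rfl
        · rw [Function.update_of_ne]
          rintro ⟨⟩
          exact h rfl
      have e2 : ∀ j, (if j = a then 1 else Function.update g (i, σ i) t (j, σ a)) =
          if j = a then 1 else g (j, σ a) := by
        intro j
        split_ifs with h
        · rfl
        · rw [Function.update_of_ne]
          intro h'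
          rw [Prod.mk.injEq] at h'
          exact h (h'.1.trans (hσ h'.2.symm))
      simp only [e1, e2])
  rw [Finset.card_univ, Fintype.card_fin] at h0
  have hL := one_le_harmonicSum hN
  calc _ ≤ _ := logMass_mono fun g _ h => ⟨h.2, fun i _ => h.1 i⟩
    _ ≤ _ := h0
    _ ≤ (3 * H / x : ℝ) ^ k * (2 * (H / x) * harmonicSum N ^ (2 * k ^ 2)) := by
        gcongr
        exact logMass_crossClose_le hN x H _
    _ ≤ (3 * H / x : ℝ) ^ k * (3 * H / x * harmonicSum N ^ (2 * k ^ 2)) := by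
        gcongr
        rw [← mul_div_assoc]
        gcongr
        norm_num
    _ = _ := by ring

lemma logMass_or_le {ι : Type*} [Fintype ι] [DecidableEq ι] (p q : (ι → ℕ) → Prop) :
    logMass N (fun g => p g ∨ q g) ≤ logMass N p + logMass N q := by
  unfold logMass
  simp only [Finset.sum_filter, ← Finset.sum_add_distrib]
  refine Finset.sum_le_sum fun g _ => ?_
  have := logWeight_nonneg g
  by_cases hp : p g <;> by_cases hq : q g <;> simp [hp, hq, this]

lemma logMass_exists_le {ι A : Type*} [Fintype ι] [DecidableEq ι] [Fintype A]
    (p : A → (ι → ℕ) → Prop) :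
    logMass N (fun g => ∃ a, p a g) ≤ ∑ a, logMass N (p a) := by
  classical
  unfold logMass
  simp only [Finset.sum_filter]
  rw [Finset.sum_comm]
  refine Finset.sum_le_sum fun g _ => ?_
  have h0 : ∀ a ∈ Finset.univ, 0 ≤ if p a g then logWeight g else 0 := fun a _ => by
    split_ifs
    · exact logWeight_nonneg g
    · exact le_rfl
  split_ifs with h
  · obtain ⟨a, ha⟩ := h
    have := Finset.single_le_sum h0 (Finset.mem_univ a)
    simpa [ha] using this
  · exact Finset.sum_nonneg h0

lemma exists_large_of_prod (hH : 1 ≤ H) (hxH : x ^ k ≤ x * H ^ k) (f : Fin k → ℕ)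
    (hf : x < ∏ j, f j) : ∃ j, x ≤ H * f j := by
  by_contra! h
  have h1 : H ^ k * ∏ j, f j ≤ x ^ k := by
    calc H ^ k * ∏ j, f j = ∏ j, H * f j := by
          rw [Finset.prod_mul_distrib, Finset.prod_const, Finset.card_univ, Fintype.card_fin]
      _ ≤ ∏ _j : Fin k, x := Finset.prod_le_prod' fun j _ => (h j).le
      _ = x ^ k := by simp
  have h2 : H ^ k * x < H ^ k * ∏ j, f j := Nat.mul_lt_mul_of_pos_left hf (by positivity)
  rw [mul_comm] at h2
  omega

lemma relClose_of_mul_mem {x H v r c : ℕ} (hx : 1 ≤ x) (hrc : r ≠ c)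
    (hr : x < v * r ∧ v * r ≤ x + H) (hc : x < v * c ∧ v * c ≤ x + H) : RelClose x H r c := by
  have key : ∀ r c, (x < v * r ∧ v * r ≤ x + H) → (x < v * c ∧ v * c ≤ x + H) →
      c ≤ r + H * r / x ∧ r ≤ c + H * r / x := by
    intro r c hr hc
    have h1 : ∀ d, v * d ≤ H → d ≤ H * r / x := by
      intro d hd
      rw [Nat.le_div_iff_mul_le (by omega)]
      calc d * x ≤ d * (v * r) := Nat.mul_le_mul_left _ hr.1.le
        _ = v * d * r := by ring
        _ ≤ H * r := Nat.mul_le_mul_right _ hd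
    have h2 := h1 (c - r) (by rw [Nat.mul_sub]; omega)
    have h3 := h1 (r - c) (by rw [Nat.mul_sub]; omega)
    omega
  exact ⟨hrc, key r c hr hc, key c r hc hr⟩

lemma matrix_dichotomy (hk : 1 ≤ k) (hH : 1 ≤ H) (hx : 1 ≤ x) (hxH : x ^ k ≤ x * H ^ k)
    (g : Fin k × Fin k → ℕ) (hr : ∀ i, x < ∏ j, g (i, j) ∧ ∏ j, g (i, j) ≤ x + H)
    (hc : ∀ j, x < ∏ i, g (i, j) ∧ ∏ i, g (i, j) ≤ x + H)
    (hrc : ∀ i j, ∏ j', g (i, j') ≠ ∏ i', g (i', j)) :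
    ∃ s : (Fin k → Fin k) × Fin k × Fin k,
      (s.2.2 ≠ s.1 s.2.1 ∧ (∀ i, LineCond x H (row i) (i, s.1 i) g) ∧
        LineCond x H (col s.2.2) (s.2.1, s.2.2) g) ∨
      (Function.Injective s.1 ∧ (∀ i, LineCond x H (row i) (i, s.1 i) g) ∧
        CrossClose x H (s.2.1, s.1 s.2.1) g) := by
  choose σ hσ using fun i => exists_large_of_prod hH hxH (fun j => g (i, j)) (hr i).1
  have hline : ∀ i, LineCond x H (row i) (i, σ i) g := fun i => by
    unfold LineCond
    rw [prod_row]
    exact ⟨hr i, hσ i⟩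
  by_cases hA : ∃ a b, b ≠ σ a ∧ x ≤ H * g (a, b)
  · obtain ⟨a, b, hb, hab⟩ := hA
    refine ⟨(σ, a, b), Or.inl ⟨hb, hline, ?_⟩⟩
    unfold LineCond
    rw [prod_col]
    exact ⟨hc b, hab⟩
  · push Not at hA
    have hsurj : Function.Surjective σ := fun j => by
      obtain ⟨i, hi⟩ := exists_large_of_prod hH hxH (fun i => g (i, j)) (hc j).1
      by_contra hne
      push Not at hne
      exact absurd hi (not_le.mpr (hA i j (hne i).symm))
    let a : Fin k := ⟨0, hk⟩
    refine ⟨(σ, a, a), Or.inr ⟨Finite.injective_iff_surjective.mpr hsurj, hline, ?_⟩⟩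
    have e1 := mul_prod_ite_eq_prod (fun j => g (a, j)) (σ a)
    have e2 := mul_prod_ite_eq_prod (fun i => g (i, σ a)) a
    refine relClose_of_mul_mem (v := g (a, σ a)) hx (fun h => hrc a (σ a) ?_) ?_ ?_
    · rw [← e1, ← e2]
      exact congrArg _ h
    · exact e1 ▸ hr a
    · exact e2 ▸ hc (σ a)

end MatrixCount

lemma mem_equalProductPairs {k x H : ℕ} {q : (Fin k → ℕ) × (Fin k → ℕ)} :
    q ∈ equalProductPairs k x H ↔ ((∀ i, x < q.1 i ∧ q.1 i ≤ x + H) ∧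
      ∀ i, x < q.2 i ∧ q.2 i ≤ x + H) ∧ ∏ i, q.1 i = ∏ i, q.2 i := by
  simp [equalProductPairs]

lemma card_le_mul_logMass {k x H : ℕ} {S : Finset ((Fin k → ℕ) × (Fin k → ℕ))}
    (hS : S ⊆ equalProductPairs k x H) (p : (Fin k × Fin k → ℕ) → Prop)
    (hp : ∀ q ∈ S, ∀ g : Fin k × Fin k → ℕ, (∀ i, ∏ j, g (i, j) = q.1 i) →
      (∀ j, ∏ i, g (i, j) = q.2 j) → p g) :
    (S.card : ℝ) ≤ ((x + H : ℕ) : ℝ) ^ k * logMass (x + H) p := by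
  have h1 := sum_logWeight_le_logMass (N := x + H) S (fun q hq => by
    obtain ⟨⟨h1, h2⟩, h3⟩ := mem_equalProductPairs.mp (hS hq)
    exact ⟨⟨mem_box.mpr fun i => ⟨by have := h1 i; omega, (h1 i).2⟩,
      mem_box.mpr fun i => ⟨by have := h2 i; omega, (h2 i).2⟩⟩, h3⟩) p
    fun q hq g _ => hp q hq g
  refine le_trans ?_ (mul_le_mul_of_nonneg_left h1 (by positivity))
  rw [Finset.mul_sum]
  refine (le_of_eq (by simp)).trans (Finset.sum_le_sum (f := fun _ => (1 : ℝ)) fun q hq => ?_)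
  obtain ⟨⟨h1, -⟩, -⟩ := mem_equalProductPairs.mp (hS hq)
  have h2 : ∏ i, q.1 i ≤ (x + H) ^ k :=
    (Finset.prod_le_prod' fun i _ => (h1 i).2).trans_eq (by simp)
  have h3 : 0 < ∏ i, q.1 i := Finset.prod_pos fun i _ => by have := h1 i; omega
  rw [logWeight_eq_inv, ← div_eq_mul_inv, le_div_iff₀ (by exact_mod_cast h3), one_mul]
  exact_mod_cast h2

lemma card_equalProductPairs_le (k x H : ℕ) :
    ((equalProductPairs k x H).card : ℝ) ≤
      ((x + H : ℕ) : ℝ) ^ k * harmonicSum (x + H) ^ k ^ 2 := by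
  refine (card_le_mul_logMass subset_rfl (fun _ => True) fun _ _ _ _ _ => trivial).trans ?_
  refine mul_le_mul_of_nonneg_left ((logMass_le _).trans_eq ?_) (by positivity)
  rw [Fintype.card_prod, Fintype.card_fin, sq]

/-- The pairs of tuples in `(x, x + H]` with equal products and no common entry. -/
def disjointPairs (k x H : ℕ) : Finset ((Fin k → ℕ) × (Fin k → ℕ)) :=
  {q ∈ equalProductPairs k x H | ∀ i j, q.1 i ≠ q.2 j}

lemma card_disjointPairs_le_of_long {k x H : ℕ} (hk : 1 ≤ k) (hH : 1 ≤ H) (hx : 1 ≤ x)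
    (hHx : H ≤ x) (hxH : x ^ k ≤ x * H ^ k) :
    ((disjointPairs k x H).card : ℝ) ≤ 6 ^ (k + 1) * k ^ (k + 2) * (H ^ k * (H / x)) *
      harmonicSum (x + H) ^ (2 * k ^ 2) := by
  classical
  have hN : 1 ≤ x + H := by omega
  set B : ℝ := (3 * H / x : ℝ) ^ (k + 1) * harmonicSum (x + H) ^ (2 * k ^ 2) with hB
  have hL := one_le_harmonicSum hN
  have hB0 : 0 ≤ B := by positivity
  have hzero : ∀ (Q : (Fin k × Fin k → ℕ) → Prop), (∀ g, ¬ Q g) → logMass (x + H) Q ≤ B := by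
    intro Q hQ
    refine le_trans (le_of_eq ?_) hB0
    unfold logMass
    simp [hQ]
  have h1 := card_le_mul_logMass (Finset.filter_subset _ _ :
    disjointPairs k x H ⊆ equalProductPairs k x H) _ fun q hq g hr hc => by
      obtain ⟨hq, hne⟩ := Finset.mem_filter.mp hq
      obtain ⟨⟨h1, h2⟩, -⟩ := mem_equalProductPairs.mp hq
      exact matrix_dichotomy hk hH hx hxH g (fun i => hr i ▸ h1 i) (fun j => hc j ▸ h2 j)
        fun i j => hr i ▸ hc j ▸ hne i j
  refine h1.trans ?_
  have h2 := (logMass_exists_le (N := x + H) fun (s : (Fin k → Fin k) × Fin k × Fin k) g =>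
      (s.2.2 ≠ s.1 s.2.1 ∧ (∀ i, LineCond x H (row i) (i, s.1 i) g) ∧
        LineCond x H (col s.2.2) (s.2.1, s.2.2) g) ∨
      (Function.Injective s.1 ∧ (∀ i, LineCond x H (row i) (i, s.1 i) g) ∧
        CrossClose x H (s.2.1, s.1 s.2.1) g)).trans
    (Finset.sum_le_card_nsmul _ _ (B + B) fun s _ => (logMass_or_le _ _).trans (add_le_add (by
      by_cases h : s.2.2 ≠ s.1 s.2.1
      · refine (logMass_mono fun g _ hg => hg.2).trans
          ((logMass_rows_and_col_le hN hx hHx s.1 s.2.1 s.2.2 h).trans ?_)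
        rw [hB]
        gcongr
        omega
      · exact hzero _ fun g hg => h hg.1) (by
      by_cases h : Function.Injective s.1
      · exact (logMass_mono fun g _ hg => hg.2).trans
          (logMass_rows_and_cross_le hN hx hHx s.1 h s.2.1)
      · exact hzero _ fun g hg => h hg.1)))
  have hcard : (Finset.univ : Finset ((Fin k → Fin k) × Fin k × Fin k)).card = k ^ (k + 2) := by
    simp [Finset.card_univ]
    ring
  rw [hcard, nsmul_eq_mul] at h2
  have hxR : (0 : ℝ) < x := by exact_mod_cast hx
  have hHxR : (H : ℝ) ≤ x := by exact_mod_cast hHx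
  calc _ ≤ ((x + H : ℕ) : ℝ) ^ k * (((k ^ (k + 2) : ℕ) : ℝ) * (B + B)) := by gcongr
    _ ≤ (2 * x : ℝ) ^ k * (((k ^ (k + 2) : ℕ) : ℝ) * (B + B)) := by
        gcongr
        push_cast
        linarith
    _ = _ := by
        rw [hB, div_pow, mul_pow, mul_pow, show (6 : ℝ) = 2 * 3 by norm_num, mul_pow]
        push_cast
        field_simp
        ring

lemma exists_add_one_pow_le (j : ℕ) : ∃ c : ℕ, 1 ≤ c ∧ ∀ v : ℕ, (v + 1) ^ j ≤ c * 2 ^ v := by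
  refine ⟨(j + 1) ^ j, Nat.one_le_pow _ _ (by omega), fun v => ?_⟩
  have h1 : v + 1 ≤ (j + 1) * 2 ^ (v / (j + 1)) :=
    (Nat.lt_mul_div_succ v (by omega)).trans_le
      (Nat.mul_le_mul_left _ Nat.lt_two_pow_self)
  refine (Nat.pow_le_pow_left h1 j).trans ?_
  rw [mul_pow, ← pow_mul]
  refine Nat.mul_le_mul_left _ (Nat.pow_le_pow_right (by omega) ?_)
  exact (Nat.mul_le_mul_left _ (Nat.le_succ j)).trans (Nat.div_mul_le_self v (j + 1))

/-- The divisor bound: every power of the divisor function is at most linear. -/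
lemma exists_card_divisors_pow_le (j : ℕ) :
    ∃ C : ℕ, 1 ≤ C ∧ ∀ n : ℕ, n ≠ 0 → n.divisors.card ^ j ≤ C * n := by
  obtain ⟨c, hc1, hc⟩ := exists_add_one_pow_le j
  refine ⟨c ^ 2 ^ j, Nat.one_le_pow _ _ hc1, fun n hn => ?_⟩
  have hp : ∀ p ∈ n.primeFactors, (n.factorization p + 1) ^ j ≤
      (if p < 2 ^ j then c else 1) * p ^ n.factorization p := by
    intro p hp
    have hp2 := (Nat.prime_of_mem_primeFactors hp).two_le
    split_ifs with h
    · exact (hc _).trans (Nat.mul_le_mul_left _ (Nat.pow_le_pow_left hp2 _))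
    · rw [one_mul]
      calc (n.factorization p + 1) ^ j ≤ (2 ^ n.factorization p) ^ j :=
            Nat.pow_le_pow_left Nat.lt_two_pow_self _
        _ = (2 ^ j) ^ n.factorization p := by rw [← pow_mul, ← pow_mul, mul_comm]
        _ ≤ _ := Nat.pow_le_pow_left (not_lt.mp h) _
  have hconst : ∏ p ∈ n.primeFactors, (if p < 2 ^ j then c else 1) ≤ c ^ 2 ^ j := by
    rw [← Finset.prod_filter, Finset.prod_const]
    refine Nat.pow_le_pow_right hc1 ?_
    refine (Finset.card_le_card (t := Finset.range (2 ^ j)) fun p hp => ?_).trans_eq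
      (Finset.card_range _)
    exact Finset.mem_range.mpr (Finset.mem_filter.mp hp).2
  rw [Nat.card_divisors hn, ← Finset.prod_pow]
  refine (Finset.prod_le_prod' hp).trans ?_
  rw [Finset.prod_mul_distrib]
  refine Nat.mul_le_mul hconst (le_of_eq ?_)
  conv_rhs => rw [← Nat.prod_factorization_pow_eq_self hn]
  rfl

lemma card_filter_dvd_mul_le {x H d : ℕ} (hd : 1 ≤ d) (hdH : d ≤ H) :
    {n ∈ Finset.Ioc x (x + H) | d ∣ n}.card * d ≤ 2 * H := by
  have hsub : {n ∈ Finset.Ioc x (x + H) | d ∣ n} ⊆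
      (Finset.Ioc (x / d) ((x + H) / d)).image fun t => d * t := by
    intro n hn
    rw [Finset.mem_filter, Finset.mem_Ioc] at hn
    obtain ⟨hn, t, rfl⟩ := hn
    refine Finset.mem_image_of_mem _ (Finset.mem_Ioc.mpr ?_)
    rw [Nat.div_lt_iff_lt_mul hd, Nat.le_div_iff_mul_le hd, mul_comm]
    exact hn
  have h1 := (Finset.card_le_card hsub).trans Finset.card_image_le
  rw [Nat.card_Ioc] at h1
  have h2 := Nat.div_mul_le_self (x + H) d
  have h3 := Nat.lt_div_mul_add (a := x) (show 0 < d by omega)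
  have h4 := Nat.mul_le_mul_right d h1
  rw [Nat.sub_mul] at h4
  omega

lemma card_le_pow_of_dvd {k D n : ℕ} (hn : n ≠ 0) (hD : n.divisors.card ≤ D)
    {S : Finset (Fin k → ℕ)} (hS : ∀ d ∈ S, ∀ i, d i ∣ n) : S.card ≤ D ^ k := by
  have hsub : S ⊆ Fintype.piFinset fun _ => n.divisors := fun d hd =>
    Fintype.mem_piFinset.mpr fun i => Nat.mem_divisors.mpr ⟨hS d hd i, hn⟩
  refine (Finset.card_le_card hsub).trans ?_
  rw [Fintype.card_piFinset, Finset.prod_const, Finset.card_univ, Fintype.card_fin]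
  exact Nat.pow_le_pow_left hD k

lemma card_disjointPairs_mul_le {k x H D : ℕ} (hk : 1 ≤ k)
    (hD : ∀ n, n ≠ 0 → n ≤ (x + H) ^ k → n.divisors.card ≤ D) :
    (disjointPairs k x H).card * x ≤ D ^ (2 * k) * H * (2 * H) ^ k := by
  classical
  set I := Finset.Ioc x (x + H) with hI
  set T := (disjointPairs k x H).image Prod.snd with hT
  have hmem : ∀ q ∈ disjointPairs k x H, _ := fun q hq =>
    mem_equalProductPairs.mp (Finset.mem_filter.mp hq).1
  have hfib : (disjointPairs k x H).card ≤ D ^ k * T.card := by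
    refine Finset.card_le_mul_card_image _ _ fun n hn => ?_
    obtain ⟨q, hq, rfl⟩ := Finset.mem_image.mp hn
    obtain ⟨⟨-, h2⟩, -⟩ := hmem q hq
    have hn0 : ∏ i, q.2 i ≠ 0 := Finset.prod_ne_zero_iff.mpr fun i _ => by
      have := h2 i; omega
    have hnle : ∏ i, q.2 i ≤ (x + H) ^ k :=
      (Finset.prod_le_prod' fun i _ => (h2 i).2).trans_eq (by simp)
    refine le_trans (le_of_eq (Finset.card_image_of_injOn (f := Prod.fst) ?_).symm)
      (card_le_pow_of_dvd hn0 (hD _ hn0 hnle) ?_)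
    · intro a ha b hb hab
      have ha' := (Finset.mem_filter.mp ha).2
      have hb' := (Finset.mem_filter.mp hb).2
      exact Prod.ext hab (ha'.trans hb'.symm)
    · intro d hd i
      obtain ⟨a, ha, rfl⟩ := Finset.mem_image.mp hd
      obtain ⟨ha, ha'⟩ := Finset.mem_filter.mp ha
      rw [← ha', ← (hmem a ha).2]
      exact Finset.dvd_prod_of_mem _ (Finset.mem_univ i)
  set E : Finset (Fin k → ℕ) := {d ∈ Fintype.piFinset fun _ => Finset.Icc 1 H |
    ∏ j, d j ∈ I} with hE
  have hEcard : E.card ≤ D ^ k * H := by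
    have h1 := Finset.card_le_mul_card_image (f := fun d : Fin k → ℕ => ∏ j, d j) E (D ^ k)
      fun m hm => by
        obtain ⟨d, hd, rfl⟩ := Finset.mem_image.mp hm
        have hdI := (Finset.mem_filter.mp hd).2
        rw [hI, Finset.mem_Ioc] at hdI
        refine card_le_pow_of_dvd (by omega) (hD _ (by omega)
          (hdI.2.trans (Nat.le_self_pow (by omega) _))) fun d' hd' i => ?_
        rw [← (Finset.mem_filter.mp hd').2]
        exact Finset.dvd_prod_of_mem _ (Finset.mem_univ i)
    refine h1.trans (Nat.mul_le_mul_left _ ?_)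
    refine (Finset.card_le_card (t := I) fun m hm => ?_).trans_eq (by simp [hI])
    obtain ⟨d, hd, rfl⟩ := Finset.mem_image.mp hm
    exact (Finset.mem_filter.mp hd).2
  have hTsub : T ⊆ E.biUnion fun d => Fintype.piFinset fun j => {n ∈ I | d j ∣ n} := by
    intro n hn
    obtain ⟨q, hq, rfl⟩ := Finset.mem_image.mp hn
    obtain ⟨⟨h1, h2⟩, h3⟩ := hmem q hq
    have hne := (Finset.mem_filter.mp hq).2
    let a : Fin k := ⟨0, hk⟩
    obtain ⟨d, hd, hd'⟩ := exists_prod_dvd_of_dvd_prod Finset.univ q.2 (a := q.1 a)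
      (by have := h1 a; omega) (h3 ▸ Finset.dvd_prod_of_mem _ (Finset.mem_univ a))
    have hda : ∀ j, d j ∣ q.1 a := fun j => hd' ▸ Finset.dvd_prod_of_mem _ (Finset.mem_univ j)
    refine Finset.mem_biUnion.mpr ⟨d, Finset.mem_filter.mpr ⟨Fintype.mem_piFinset.mpr fun j => ?_,
      ?_⟩, Fintype.mem_piFinset.mpr fun j => ?_⟩
    · have hj := hd j (Finset.mem_univ j)
      have ha1 := h1 a
      have hj2 := h2 j
      have hnej := hne a j
      rw [Finset.mem_Icc]
      refine ⟨Nat.pos_of_dvd_of_pos hj (by omega), ?_⟩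
      rcases Nat.lt_or_gt_of_ne hnej with h | h
      · have := Nat.le_of_dvd (by omega) (Nat.dvd_sub hj (hda j))
        omega
      · have := Nat.le_of_dvd (by omega) (Nat.dvd_sub (hda j) hj)
        omega
    · rw [hd', hI, Finset.mem_Ioc]
      exact h1 a
    · rw [Finset.mem_filter, hI, Finset.mem_Ioc]
      exact ⟨h2 j, hd j (Finset.mem_univ j)⟩
  have hTcard : T.card * x ≤ E.card * (2 * H) ^ k := by
    refine (Nat.mul_le_mul_right x ((Finset.card_le_card hTsub).trans Finset.card_biUnion_le)).trans
      ?_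
    rw [Finset.sum_mul, ← smul_eq_mul]
    refine Finset.sum_le_card_nsmul _ _ _ fun d hd => ?_
    obtain ⟨hd1, hd2⟩ := Finset.mem_filter.mp hd
    rw [hI, Finset.mem_Ioc] at hd2
    rw [Fintype.card_piFinset]
    refine (Nat.mul_le_mul_left _ hd2.1.le).trans ?_
    rw [← Finset.prod_mul_distrib]
    refine (Finset.prod_le_prod' fun j _ => ?_).trans_eq
      (by rw [Finset.prod_const, Finset.card_univ, Fintype.card_fin])
    have := Finset.mem_Icc.mp (Fintype.mem_piFinset.mp hd1 j)
    exact card_filter_dvd_mul_le this.1 this.2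
  calc (disjointPairs k x H).card * x ≤ D ^ k * T.card * x := Nat.mul_le_mul_right _ hfib
    _ = D ^ k * (T.card * x) := by ring
    _ ≤ D ^ k * ((D ^ k * H) * (2 * H) ^ k) :=
        Nat.mul_le_mul_left _ (hTcard.trans (Nat.mul_le_mul_right _ hEcard))
    _ = _ := by ring

lemma exists_card_disjointPairs_le_of_short (k : ℕ) (hk : 1 ≤ k) :
    ∃ C : ℝ, 0 ≤ C ∧ ∀ x H : ℕ, 1 ≤ x → 1 ≤ H → H ≤ x → x * H ^ k ≤ x ^ k →
      ((disjointPairs k x H).card : ℝ) ≤ C * (H ^ k * (Real.sqrt H / Real.sqrt x)) := by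
  obtain ⟨C, hC1, hC⟩ := exists_card_divisors_pow_le (4 * k ^ 3)
  refine ⟨2 ^ k * Real.sqrt (2 * C), by positivity, fun x H hx hH hHx hxH => ?_⟩
  obtain ⟨n₀, hn₀, hmax⟩ := Finset.exists_max_image (Finset.Icc 1 ((x + H) ^ k))
    (fun n => n.divisors.card) ⟨1, Finset.mem_Icc.mpr ⟨le_rfl, Nat.one_le_pow _ _ (by omega)⟩⟩
  set D := n₀.divisors.card with hDdef
  rw [Finset.mem_Icc] at hn₀
  have h1 := card_disjointPairs_mul_le (x := x) (H := H) (D := D) hk fun n hn hn' =>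
    hmax n (Finset.mem_Icc.mpr ⟨Nat.pos_of_ne_zero hn, hn'⟩)
  have hDk : D ^ (4 * k ^ 2) ≤ 2 * C * x := by
    refine (Nat.pow_le_pow_iff_left (n := k) (by omega)).mp ?_
    calc (D ^ (4 * k ^ 2)) ^ k = D ^ (4 * k ^ 3) := by rw [← pow_mul]; ring_nf
      _ ≤ C * n₀ := hC n₀ (by omega)
      _ ≤ C ^ k * (2 * x) ^ k := Nat.mul_le_mul (Nat.le_self_pow (by omega) _)
          (hn₀.2.trans (Nat.pow_le_pow_left (by omega) _))
      _ = _ := by rw [← mul_pow]; ring_nf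
  have hDH : D ^ (4 * k) * H ≤ 2 * C * x := by
    refine (Nat.pow_le_pow_iff_left (n := k) (by omega)).mp ?_
    refine Nat.le_of_mul_le_mul_right (c := x) ?_ hx
    calc (D ^ (4 * k) * H) ^ k * x = D ^ (4 * k ^ 2) * (x * H ^ k) := by
          rw [mul_pow, ← pow_mul]; ring_nf
      _ ≤ (2 * C * x) * x ^ k := Nat.mul_le_mul hDk hxH
      _ ≤ (2 * C) ^ k * x * x ^ k := by
          gcongr
          exact Nat.le_self_pow (by omega) _
      _ = _ := by rw [mul_pow (2 * C) x]; ring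
  have hxR : (0 : ℝ) < x := by exact_mod_cast hx
  have hsx : 0 < Real.sqrt x := Real.sqrt_pos.mpr hxR
  have hs : (D : ℝ) ^ (2 * k) * Real.sqrt H ≤ Real.sqrt (2 * C) * Real.sqrt x := by
    rw [← Real.sqrt_mul (by positivity)]
    refine Real.le_sqrt_of_sq_le ?_
    rw [mul_pow, Real.sq_sqrt (Nat.cast_nonneg _), ← pow_mul]
    calc (D : ℝ) ^ (2 * k * 2) * H = ((D ^ (4 * k) * H : ℕ) : ℝ) := by push_cast; ring_nf
      _ ≤ ((2 * C * x : ℕ) : ℝ) := by exact_mod_cast hDH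
      _ = _ := by push_cast; ring
  have h1R : ((disjointPairs k x H).card : ℝ) * x ≤ (D : ℝ) ^ (2 * k) * H * (2 * H) ^ k := by
    exact_mod_cast h1
  have hsq : Real.sqrt x * Real.sqrt x = x := Real.mul_self_sqrt hxR.le
  have hsqH : Real.sqrt H * Real.sqrt H = H := Real.mul_self_sqrt (Nat.cast_nonneg _)
  refine le_of_mul_le_mul_right ?_ hxR
  calc _ ≤ _ := h1R
    _ = ((D : ℝ) ^ (2 * k) * Real.sqrt H) * (Real.sqrt H * (2 * H) ^ k) := by
        nth_rewrite 1 [← hsqH]; ring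
    _ ≤ (Real.sqrt (2 * C) * Real.sqrt x) * (Real.sqrt H * (2 * H) ^ k) := by gcongr
    _ = _ := by
        rw [mul_pow]
        field_simp
        rw [Real.sq_sqrt hxR.le]

open Classical in
/-- The pairs of tuples in `(x, x + H]` that are permutations of each other. -/
noncomputable def permPairs (k x H : ℕ) : Finset ((Fin k → ℕ) × (Fin k → ℕ)) :=
  {q ∈ equalProductPairs k x H | ∃ σ : Equiv.Perm (Fin k), q.2 = q.1 ∘ σ}

open Classical in
/-- The pairs of tuples in `(x, x + H]` with equal products that are not permutations of each
other. -/
noncomputable def nonPermPairs (k x H : ℕ) : Finset ((Fin k → ℕ) × (Fin k → ℕ)) :=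
  {q ∈ equalProductPairs k x H | ¬ ∃ σ : Equiv.Perm (Fin k), q.2 = q.1 ∘ σ}

lemma card_permPairs_add_card_nonPermPairs (k x H : ℕ) :
    (permPairs k x H).card + (nonPermPairs k x H).card = (equalProductPairs k x H).card := by
  classical
  exact Finset.card_filter_add_card_filter_not _

lemma card_permPairs_le (k x H : ℕ) : (permPairs k x H).card ≤ k.factorial * H ^ k := by
  classical
  have hsub : permPairs k x H ⊆ ((Fintype.piFinset fun _ : Fin k => Finset.Ioc x (x + H)) ×ˢ
      (Finset.univ : Finset (Equiv.Perm (Fin k)))).image fun z => (z.1, z.1 ∘ z.2) := by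
    intro q hq
    obtain ⟨hq, σ, hσ⟩ := Finset.mem_filter.mp hq
    refine Finset.mem_image.mpr ⟨(q.1, σ), Finset.mem_product.mpr ⟨?_, Finset.mem_univ _⟩,
      Prod.ext rfl hσ.symm⟩
    exact (Finset.mem_product.mp (Finset.mem_filter.mp hq).1).1
  refine ((Finset.card_le_card hsub).trans Finset.card_image_le).trans_eq ?_
  rw [Finset.card_product, Fintype.card_piFinset, Finset.card_univ, Fintype.card_perm]
  simp [mul_comm]

lemma le_card_permPairs (k x H : ℕ) : k.factorial * H.descFactorial k ≤ (permPairs k x H).card := by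
  classical
  let Ψ : (Fin k ↪ Finset.Ioc x (x + H)) × Equiv.Perm (Fin k) → (Fin k → ℕ) × (Fin k → ℕ) :=
    fun z => (fun i => z.1 i, fun i => z.1 (z.2 i))
  have hinj : Function.Injective Ψ := by
    rintro ⟨e, σ⟩ ⟨e', σ'⟩ h
    obtain ⟨h1, h2⟩ := Prod.ext_iff.mp h
    obtain rfl : e = e' := by
      ext i
      exact congrFun h1 i
    refine Prod.ext rfl (Equiv.ext fun i => e.injective (Subtype.ext ?_))
    exact congrFun h2 i
  have hcard : (Finset.univ.image Ψ).card = k.factorial * H.descFactorial k := by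
    rw [Finset.card_image_of_injective _ hinj, Finset.card_univ, Fintype.card_prod,
      Fintype.card_embedding_eq, Fintype.card_perm, Fintype.card_coe, Nat.card_Ioc,
      Fintype.card_fin, Nat.add_sub_cancel_left, mul_comm]
  rw [← hcard]
  refine Finset.card_le_card fun q hq => ?_
  obtain ⟨⟨e, σ⟩, -, rfl⟩ := Finset.mem_image.mp hq
  have he : ∀ i, x < (e i : ℕ) ∧ (e i : ℕ) ≤ x + H := fun i => Finset.mem_Ioc.mp (e i).2
  exact Finset.mem_filter.mpr ⟨mem_equalProductPairs.mpr ⟨⟨fun i => he i, fun i => he (σ i)⟩,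
    (Equiv.prod_comp σ fun i => (e i : ℕ)).symm⟩, σ, rfl⟩

lemma pow_mul_le_descFactorial (k : ℕ) {H : ℕ} (hH : 1 ≤ H) :
    (H : ℝ) ^ k * (1 - k ^ 2 / H) ≤ H.descFactorial k := by
  have hHR : (0 : ℝ) < H := by exact_mod_cast hH
  rcases le_or_gt k H with hk | hk
  · have hkR : (k : ℝ) ≤ H := by exact_mod_cast hk
    have h1 := one_add_mul_le_pow (a := -(k / H : ℝ)) (by
      have : (k / H : ℝ) ≤ 1 := (div_le_one hHR).mpr hkR
      linarith) k
    have h2 : (((H - k) ^ k : ℕ) : ℝ) ≤ H.descFactorial k := by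
      exact_mod_cast (Nat.pow_le_pow_left (by omega) k).trans (Nat.pow_sub_le_descFactorial H k)
    refine le_trans ?_ h2
    calc (H : ℝ) ^ k * (1 - k ^ 2 / H) = H ^ k * (1 + k * -(k / H : ℝ)) := by ring
      _ ≤ H ^ k * (1 + -(k / H : ℝ)) ^ k := by gcongr
      _ = _ := by
        rw [← mul_pow]
        push_cast [hk]
        congr 1
        field_simp
        ring
  · refine le_trans (mul_nonpos_of_nonneg_of_nonpos (by positivity) ?_) (Nat.cast_nonneg _)
    rw [sub_nonpos, one_le_div hHR]
    have : H ≤ k ^ 2 := hk.le.trans (Nat.le_self_pow (by norm_num) k)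
    exact_mod_cast this

lemma exists_perm_of_succAbove {k : ℕ} {m n : Fin (k + 1) → ℕ} {i j : Fin (k + 1)}
    (hij : m i = n j) {σ : Equiv.Perm (Fin k)}
    (h : (fun l => n (j.succAbove l)) = (fun l => m (i.succAbove l)) ∘ σ) :
    ∃ τ : Equiv.Perm (Fin (k + 1)), n = m ∘ τ := by
  refine ⟨(finSuccEquiv' j).trans ((Equiv.optionCongr σ).trans (finSuccEquiv' i).symm), ?_⟩
  ext l
  rcases Fin.eq_self_or_eq_succAbove j l with rfl | ⟨l, rfl⟩
  · simp [hij]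
  · simpa using congrFun h l

lemma card_nonPermPairs_succ_le (k x H : ℕ) :
    (nonPermPairs (k + 1) x H).card ≤
      (disjointPairs (k + 1) x H).card + (k + 1) ^ 2 * (H * (nonPermPairs k x H).card) := by
  classical
  have hsub : nonPermPairs (k + 1) x H ⊆ disjointPairs (k + 1) x H ∪
      (Finset.univ : Finset (Fin (k + 1) × Fin (k + 1))).biUnion fun u =>
        (Finset.Ioc x (x + H) ×ˢ nonPermPairs k x H).image fun z =>
          (Fin.insertNth (α := fun _ => ℕ) u.1 z.1 z.2.1,
            Fin.insertNth (α := fun _ => ℕ) u.2 z.1 z.2.2) := by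
    rintro ⟨m, n⟩ hq
    obtain ⟨hq, hσ⟩ := Finset.mem_filter.mp hq
    obtain ⟨⟨h1, h2⟩, h3⟩ := mem_equalProductPairs.mp hq
    by_cases hd : ∀ i j, m i ≠ n j
    · exact Finset.mem_union_left _ (Finset.mem_filter.mpr ⟨hq, hd⟩)
    push Not at hd
    obtain ⟨i, j, hij⟩ := hd
    refine Finset.mem_union_right _ (Finset.mem_biUnion.mpr ⟨(i, j), Finset.mem_univ _,
      Finset.mem_image.mpr ⟨(m i, fun l => m (i.succAbove l), fun l => n (j.succAbove l)),
        Finset.mem_product.mpr ⟨Finset.mem_Ioc.mpr (h1 i), Finset.mem_filter.mpr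
          ⟨mem_equalProductPairs.mpr ⟨⟨fun l => h1 _, fun l => h2 _⟩, ?_⟩, ?_⟩⟩, ?_⟩⟩)
    · simp only at h3
      rw [Fin.prod_univ_succAbove _ i, Fin.prod_univ_succAbove _ j, ← hij] at h3
      exact Nat.eq_of_mul_eq_mul_left ((Nat.zero_le x).trans_lt (h1 i).1) h3
    · rintro ⟨σ, h⟩
      exact hσ (exists_perm_of_succAbove hij h)
    · refine Prod.ext (Fin.insertNth_self_removeNth i m) ?_
      simp only [hij]
      exact Fin.insertNth_self_removeNth j n
  refine (Finset.card_le_card hsub).trans ((Finset.card_union_le _ _).trans ?_)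
  refine Nat.add_le_add_left (Finset.card_biUnion_le.trans ?_) _
  refine (Finset.sum_le_card_nsmul _ _ (H * (nonPermPairs k x H).card) fun u _ =>
    Finset.card_image_le.trans_eq (by simp)).trans_eq ?_
  simp [sq]

lemma exists_card_disjointPairs_le (k : ℕ) (hk : 1 ≤ k) :
    ∃ C : ℝ, 0 ≤ C ∧ ∀ x H : ℕ, 1 ≤ x → 1 ≤ H → H ≤ x →
      ((disjointPairs k x H).card : ℝ) ≤ C * (H ^ k * (Real.sqrt H / Real.sqrt x +
        H / x * harmonicSum (x + H) ^ (2 * k ^ 2))) := by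
  obtain ⟨C, hC0, hC⟩ := exists_card_disjointPairs_le_of_short k hk
  refine ⟨C + 6 ^ (k + 1) * k ^ (k + 2), by positivity, fun x H hx hH hHx => ?_⟩
  have hL := one_le_harmonicSum (show 1 ≤ x + H by omega)
  have h1 : 0 ≤ (H : ℝ) ^ k * (Real.sqrt H / Real.sqrt x) := by positivity
  have h2 : 0 ≤ (H : ℝ) ^ k * (H / x * harmonicSum (x + H) ^ (2 * k ^ 2)) := by positivity
  have hK : (0 : ℝ) ≤ 6 ^ (k + 1) * k ^ (k + 2) := by positivity
  have h3 := mul_nonneg hC0 h1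
  have h4 := mul_nonneg hC0 h2
  have h5 := mul_nonneg hK h1
  have h6 := mul_nonneg hK h2
  rcases le_total (x ^ k) (x * H ^ k) with h | h
  · have := card_disjointPairs_le_of_long hk hH hx hHx h
    nlinarith
  · have := hC x H hx hH hHx h
    nlinarith

lemma exists_card_nonPermPairs_le (k : ℕ) :
    ∃ C : ℝ, 0 ≤ C ∧ ∀ x H : ℕ, 1 ≤ x → 1 ≤ H → H ≤ x →
      ((nonPermPairs k x H).card : ℝ) ≤ C * (H ^ k * (Real.sqrt H / Real.sqrt x +
        H / x * harmonicSum (x + H) ^ (2 * k ^ 2))) := by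
  induction k with
  | zero =>
    refine ⟨0, le_rfl, fun x H _ _ _ => ?_⟩
    have : nonPermPairs 0 x H = ∅ := Finset.filter_eq_empty_iff.mpr fun q _ h =>
      h ⟨1, Subsingleton.elim _ _⟩
    simp [this]
  | succ k ih =>
    obtain ⟨C, hC0, hC⟩ := ih
    obtain ⟨C', hC'0, hC'⟩ := exists_card_disjointPairs_le (k + 1) (by omega)
    refine ⟨C' + (k + 1) ^ 2 * C, by positivity, fun x H hx hH hHx => ?_⟩
    have hL := one_le_harmonicSum (show 1 ≤ x + H by omega)
    have h1 : ((nonPermPairs (k + 1) x H).card : ℝ) ≤ (disjointPairs (k + 1) x H).card +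
        (k + 1) ^ 2 * (H * (nonPermPairs k x H).card) := by
      exact_mod_cast card_nonPermPairs_succ_le k x H
    have h2 : ((nonPermPairs k x H).card : ℝ) ≤ C * (H ^ k * (Real.sqrt H / Real.sqrt x +
        H / x * harmonicSum (x + H) ^ (2 * (k + 1) ^ 2))) := by
      refine (hC x H hx hH hHx).trans ?_
      gcongr
      omega
    calc _ ≤ _ := h1
      _ ≤ C' * (H ^ (k + 1) * (Real.sqrt H / Real.sqrt x +
            H / x * harmonicSum (x + H) ^ (2 * (k + 1) ^ 2))) +
          (k + 1) ^ 2 * (H * (C * (H ^ k * (Real.sqrt H / Real.sqrt x +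
            H / x * harmonicSum (x + H) ^ (2 * (k + 1) ^ 2))))) := by
          gcongr
          exact hC' x H hx hH hHx
      _ = _ := by ring

lemma harmonicSum_le (N : ℕ) : harmonicSum N ≤ 1 + Real.log N := by
  have h := harmonic_le_one_add_log N
  rw [harmonic_eq_sum_Icc] at h
  push_cast at h
  exact h

lemma abs_moment_sub_factorial_le_of_le {k x H : ℕ} (hx : 1 ≤ x) (hxH : x ≤ H) :
    |((equalProductPairs k x H).card : ℝ) / (H : ℝ) ^ k - k.factorial| ≤
      (2 ^ k * 4 ^ (2 * k ^ 2 + 2) + k.factorial) *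
        (1 + (Real.log x + Real.log H) ^ (2 * k ^ 2 + 2)) := by
  set ℓ := Real.log x + Real.log H
  have hxR : (1 : ℝ) ≤ x := by exact_mod_cast hx
  have hxHR : (x : ℝ) ≤ H := by exact_mod_cast hxH
  have hHpos : (0 : ℝ) < H := by linarith
  have hlx : 0 ≤ Real.log x := Real.log_nonneg hxR
  have hlH : 0 ≤ Real.log H := Real.log_nonneg (hxR.trans hxHR)
  have hℓ : 0 ≤ ℓ := add_nonneg hlx hlH
  have hL1 := one_le_harmonicSum (show 1 ≤ x + H by omega)
  have hL : harmonicSum (x + H) ≤ 2 + ℓ := by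
    refine (harmonicSum_le _).trans ?_
    have h1 : Real.log ((x + H : ℕ) : ℝ) ≤ Real.log (2 * H) := by
      refine Real.log_le_log (by push_cast; linarith) (by push_cast; linarith)
    rw [Real.log_mul two_ne_zero hHpos.ne'] at h1
    have h2 := Real.log_two_lt_d9
    linarith
  have hLpow : harmonicSum (x + H) ^ k ^ 2 ≤ 4 ^ (2 * k ^ 2 + 2) * (1 + ℓ ^ (2 * k ^ 2 + 2)) := by
    calc harmonicSum (x + H) ^ k ^ 2 ≤ harmonicSum (x + H) ^ (2 * k ^ 2 + 2) :=
          pow_le_pow_right₀ hL1 (by omega)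
      _ ≤ (2 + ℓ) ^ (2 * k ^ 2 + 2) := by gcongr
      _ ≤ (4 * max 1 ℓ) ^ (2 * k ^ 2 + 2) := by
          gcongr
          linarith [le_max_left 1 ℓ, le_max_right 1 ℓ]
      _ = 4 ^ (2 * k ^ 2 + 2) * max 1 ℓ ^ (2 * k ^ 2 + 2) := mul_pow _ _ _
      _ ≤ _ := by
          gcongr
          rcases max_cases 1 ℓ with h | h
          · rw [h.1, one_pow]
            have : 0 ≤ ℓ ^ (2 * k ^ 2 + 2) := by positivity
            linarith
          · rw [h.1]
            linarith
  have hM : ((equalProductPairs k x H).card : ℝ) / (H : ℝ) ^ k ≤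
      2 ^ k * 4 ^ (2 * k ^ 2 + 2) * (1 + ℓ ^ (2 * k ^ 2 + 2)) := by
    rw [div_le_iff₀ (by positivity)]
    calc _ ≤ _ := card_equalProductPairs_le k x H
      _ ≤ (2 * H : ℝ) ^ k * (4 ^ (2 * k ^ 2 + 2) * (1 + ℓ ^ (2 * k ^ 2 + 2))) := by
          gcongr
          push_cast
          linarith
      _ = _ := by rw [mul_pow]; ring
  have hM0 : 0 ≤ ((equalProductPairs k x H).card : ℝ) / (H : ℝ) ^ k := by positivity
  have hf : (0 : ℝ) ≤ k.factorial := Nat.cast_nonneg _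
  have hp : 0 ≤ ℓ ^ (2 * k ^ 2 + 2) := by positivity
  have hfp := mul_nonneg hf hp
  have h0 : 0 ≤ 2 ^ k * 4 ^ (2 * k ^ 2 + 2) * (1 + ℓ ^ (2 * k ^ 2 + 2)) := by positivity
  rw [abs_le]
  constructor <;> nlinarith

lemma abs_moment_sub_factorial_le (k x : ℕ) {H : ℕ} (hH : 1 ≤ H) :
    |((equalProductPairs k x H).card : ℝ) / (H : ℝ) ^ k - k.factorial| ≤
      k.factorial * k ^ 2 * (H : ℝ)⁻¹ + (nonPermPairs k x H).card / (H : ℝ) ^ k := by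
  have hHR : (0 : ℝ) < H := by exact_mod_cast hH
  have hHk : (0 : ℝ) < (H : ℝ) ^ k := by positivity
  rw [← card_permPairs_add_card_nonPermPairs, Nat.cast_add, add_div, add_sub_right_comm]
  refine (abs_add_le _ _).trans (add_le_add ?_ (abs_of_nonneg (by positivity)).le)
  have hub : ((permPairs k x H).card : ℝ) / (H : ℝ) ^ k ≤ k.factorial := by
    rw [div_le_iff₀ hHk]
    exact_mod_cast card_permPairs_le k x H
  have hlb : k.factorial * (1 - k ^ 2 / H) ≤ ((permPairs k x H).card : ℝ) / (H : ℝ) ^ k := by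
    rw [le_div_iff₀ hHk]
    have h1 : (k.factorial * H.descFactorial k : ℝ) ≤ (permPairs k x H).card := by
      exact_mod_cast le_card_permPairs k x H
    refine le_trans ?_ h1
    rw [mul_assoc, mul_comm (1 - _ : ℝ)]
    exact mul_le_mul_of_nonneg_left (pow_mul_le_descFactorial k hH) (Nat.cast_nonneg _)
  have he : (k.factorial * (1 - k ^ 2 / H) : ℝ) =
      k.factorial - k.factorial * k ^ 2 * (H : ℝ)⁻¹ := by
    ring
  have h0 : (0 : ℝ) ≤ k.factorial * k ^ 2 * (H : ℝ)⁻¹ := by positivity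
  rw [abs_le]
  constructor <;> linarith

lemma harmonicSum_pow_le {x H : ℕ} (k : ℕ) (hH : 1 ≤ H) (hHx : H < x) :
    harmonicSum (x + H) ^ (2 * k ^ 2) ≤
      4 ^ (2 * k ^ 2 + 2) * (Real.log x + Real.log H) ^ (2 * k ^ 2 + 2) := by
  have hL1 := one_le_harmonicSum (show 1 ≤ x + H by omega)
  have hx2 : (2 : ℝ) ≤ x := by exact_mod_cast (show 2 ≤ x by omega)
  have hHR : (1 : ℝ) ≤ H := by exact_mod_cast hH
  have hHxR : (H : ℝ) ≤ x := by exact_mod_cast hHx.le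
  rw [← mul_pow]
  refine (pow_le_pow_right₀ hL1 (by omega)).trans (pow_le_pow_left₀ (by linarith) ?_ _)
  refine (harmonicSum_le _).trans ?_
  have h1 : Real.log ((x + H : ℕ) : ℝ) ≤ Real.log (2 * x) :=
    Real.log_le_log (by push_cast; linarith) (by push_cast; linarith)
  rw [Real.log_mul two_ne_zero (by linarith)] at h1
  have h2 := Real.log_two_gt_d9
  have h3 := Real.log_le_log two_pos hx2
  have h4 := Real.log_nonneg hHR
  linarith

/-- for every `k ≥ 1` there is `C_k > 0` such that for all integers
`x, H ≥ 1`, the Steinhaus expectation at level `y = x + H` satisfies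
`|𝔼_f |H^{-1/2} ∑_{x<n≤x+H} f(n)|^{2k} − k!|
  ≤ C_k·(H^{-1} + H^{1/2}/max(x,H)^{1/2} + H·(log x + log H)^{2k²+2}/max(x,H))`. -/
theorem stmt0 (k : ℕ) (hk : 1 ≤ k) :
    ∃ C : ℝ, 0 < C ∧ ∀ x H : ℕ, 1 ≤ x → 1 ≤ H →
      |(∫ ω, ‖((Real.sqrt H : ℂ))⁻¹ *
            ∑ n ∈ Finset.Ioc x (x + H), steinhausF (x + H) ω n‖ ^ (2 * k)
          ∂(steinhausMeasure (x + H))) - (k.factorial : ℝ)| ≤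
        C * ((H : ℝ)⁻¹ + Real.sqrt (H : ℝ) / Real.sqrt ((max x H : ℕ) : ℝ)
          + (H : ℝ) * (Real.log x + Real.log H) ^ (2 * k ^ 2 + 2) / ((max x H : ℕ) : ℝ)) := by
  obtain ⟨C, hC0, hC⟩ := exists_card_nonPermPairs_le k
  set A : ℝ := 2 ^ k * 4 ^ (2 * k ^ 2 + 2) + k.factorial
  set B : ℝ := k.factorial * k ^ 2 + C * (1 + 4 ^ (2 * k ^ 2 + 2)) with hB
  have hA0 : 0 < A := by positivity
  have hB0 : 0 ≤ B := by positivity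
  refine ⟨A + B, by positivity, fun x H hx hH => ?_⟩
  rw [integral_norm_sum_steinhausF_pow]
  have hxR : (1 : ℝ) ≤ x := by exact_mod_cast hx
  have hHR : (1 : ℝ) ≤ H := by exact_mod_cast hH
  have hℓ : 0 ≤ Real.log x + Real.log H := add_nonneg (Real.log_nonneg hxR) (Real.log_nonneg hHR)
  rcases le_or_gt x H with h | h
  · rw [max_eq_right h, div_self (Real.sqrt_pos.mpr (by linarith)).ne',
      mul_div_cancel_left₀ _ (by linarith)]
    refine (abs_moment_sub_factorial_le_of_le hx h).trans
      (mul_le_mul (by linarith) ?_ (by positivity) (by positivity))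
    have : 0 ≤ (H : ℝ)⁻¹ := by positivity
    linarith
  · rw [max_eq_left h.le]
    set S := Real.sqrt H / Real.sqrt x
    set T := (H : ℝ) * (Real.log x + Real.log H) ^ (2 * k ^ 2 + 2) / x with hT
    have hS0 : 0 ≤ S := by positivity
    have hT0 : 0 ≤ T := by positivity
    have hH0 : 0 ≤ (H : ℝ)⁻¹ := by positivity
    have hnd : ((nonPermPairs k x H).card : ℝ) / (H : ℝ) ^ k ≤
        C * (S + 4 ^ (2 * k ^ 2 + 2) * T) := by
      rw [div_le_iff₀ (by positivity)]
      calc _ ≤ _ := hC x H hx hH h.le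
        _ ≤ C * (H ^ k * (S + H / x * (4 ^ (2 * k ^ 2 + 2) *
              (Real.log x + Real.log H) ^ (2 * k ^ 2 + 2)))) := by
            gcongr
            exact harmonicSum_pow_le k hH h
        _ = _ := by rw [hT]; ring
    refine (abs_moment_sub_factorial_le k x hH).trans ((add_le_add_right hnd _).trans ?_)
    have hAle : B * ((H : ℝ)⁻¹ + S + T) ≤ (A + B) * ((H : ℝ)⁻¹ + S + T) :=
      mul_le_mul_of_nonneg_right (by linarith) (by positivity)
    refine le_trans ?_ hAle
    have e : B * ((H : ℝ)⁻¹ + S + T) - (k.factorial * k ^ 2 * (H : ℝ)⁻¹ +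
        C * (S + 4 ^ (2 * k ^ 2 + 2) * T)) = k.factorial * k ^ 2 * (S + T) +
        C * ((1 + 4 ^ (2 * k ^ 2 + 2)) * (H : ℝ)⁻¹ + 4 ^ (2 * k ^ 2 + 2) * S + T) := by
      rw [hB]; ring
    rw [← sub_nonneg, e]
    positivity
end

section
/- For every integer k ≥ 1 there exists a constant C_k > 0 (depending only on k) such that for all integers x ≥ 1 and H ≥ 1, the number of 2k-tuples (n₁, n₂, …, n_{2k}) of integers with x < n_i ≤ x+H for all i and n₁n₂⋯n_k = n_{k+1}n_{k+2}⋯n_{2k} differs from k!·H^k by at most C_k · ( H^{k−1} + H^{k+1/2} / max(x,H)^{1/2} + H^{k+1} · (log x + log H)^{2k²+2} / max(x,H) ), where log denotes the natural logarithm. -/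
/-- The number of `2k`-tuples `(n₁,…,n_{2k}) ∈ ((x, x+H] ∩ ℤ)^{2k}` with
`n₁⋯n_k = n_{k+1}⋯n_{2k}` (here `p.1 i = n_i`, `p.2 i = n_{k+i}`). -/
noncomputable def eqProdCount (k x H : ℕ) : ℕ :=
  Nat.card {p : (Fin k → ℕ) × (Fin k → ℕ) //
    (∀ i, p.1 i ∈ Finset.Ioc x (x + H)) ∧ (∀ i, p.2 i ∈ Finset.Ioc x (x + H)) ∧
    (∏ i, p.1 i) = (∏ i, p.2 i)}

namespace ShortIntervalEnergy

open Finset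

theorem exists_card_divisors_le_rpow {ε : ℝ} (hε : 0 < ε) :
    ∃ C : ℝ, 1 ≤ C ∧ ∀ n : ℕ, n ≠ 0 → (#n.divisors : ℝ) ≤ C * (n : ℝ) ^ ε := by
  set A : ℝ := 1 / (ε * Real.log 2) + 1 with hA
  have hl : 0 < Real.log 2 := Real.log_pos (by norm_num)
  have hA1 : 1 ≤ A := by rw [hA]; linarith [show 0 ≤ 1 / (ε * Real.log 2) by positivity]
  set B : ℕ := ⌈(2 : ℝ) ^ (1 / ε)⌉₊ with hB
  refine ⟨A ^ B, one_le_pow₀ hA1, fun n hn => ?_⟩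
  have hpt : ∀ p ∈ n.primeFactors, ((n.factorization p : ℝ) + 1) ≤
      (if p < B then A else 1) * ((p : ℝ) ^ n.factorization p) ^ ε := by
    intro p hp
    set v := n.factorization p
    have hp2 : (2 : ℝ) ≤ p := by exact_mod_cast (Nat.prime_of_mem_primeFactors hp).two_le
    have hp0 : (0 : ℝ) ≤ p := by linarith
    have hcomm : ((p : ℝ) ^ v) ^ ε = ((p : ℝ) ^ ε) ^ v := by
      rw [← Real.rpow_natCast, ← Real.rpow_mul hp0, mul_comm, Real.rpow_mul hp0, Real.rpow_natCast]
    split_ifs with h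
    · have h1 : 1 + v * (ε * Real.log 2) ≤ ((p : ℝ) ^ v) ^ ε := by
        calc 1 + v * (ε * Real.log 2) ≤ Real.exp (v * (ε * Real.log 2)) := by
              linarith [Real.add_one_le_exp (v * (ε * Real.log 2))]
          _ = ((2 : ℝ) ^ v) ^ ε := by
              rw [Real.rpow_def_of_pos (by positivity), Real.log_pow]; ring_nf
          _ ≤ _ := by gcongr
      have h2 : (v : ℝ) + 1 ≤ A * (1 + v * (ε * Real.log 2)) := by
        have : A * (1 + v * (ε * Real.log 2)) = A + v + v * (ε * Real.log 2) := by
          rw [hA]; field_simp; ring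
        have h3 : 0 ≤ v * (ε * Real.log 2) := by positivity
        linarith
      exact h2.trans (by gcongr)
    · have h1 : (2 : ℝ) ≤ (p : ℝ) ^ ε := by
        have : (2 : ℝ) ^ (1 / ε) ≤ p := (Nat.le_ceil _).trans (by exact_mod_cast not_lt.1 h)
        calc (2 : ℝ) = ((2 : ℝ) ^ (1 / ε)) ^ ε := by
              rw [← Real.rpow_mul (by norm_num), one_div_mul_cancel hε.ne', Real.rpow_one]
          _ ≤ _ := by gcongr
      rw [one_mul, hcomm]
      calc (v : ℝ) + 1 ≤ (2 : ℝ) ^ v := by exact_mod_cast Nat.lt_two_pow_self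
        _ ≤ _ := by gcongr
  have hprod : ((n : ℝ)) ^ ε = ∏ p ∈ n.primeFactors, ((p : ℝ) ^ n.factorization p) ^ ε := by
    rw [Real.finsetProd_rpow _ _ (fun _ _ => by positivity)]
    congr 1
    exact_mod_cast (Nat.prod_factorization_pow_eq_self hn).symm
  rw [Nat.card_divisors hn, hprod]
  push_cast
  calc ∏ p ∈ n.primeFactors, ((n.factorization p : ℝ) + 1)
      ≤ ∏ p ∈ n.primeFactors, (if p < B then A else 1) * ((p : ℝ) ^ n.factorization p) ^ ε :=
        prod_le_prod (fun _ _ => by positivity) hpt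
    _ = (∏ p ∈ n.primeFactors, if p < B then A else 1) * _ := prod_mul_distrib
    _ ≤ _ := by
      gcongr
      rw [prod_ite, prod_const, prod_const_one, mul_one]
      refine pow_le_pow_right₀ hA1 ?_
      calc _ ≤ #(range B) := card_le_card fun p hp => by simpa using (mem_filter.1 hp).2
        _ = B := card_range B

theorem card_mul_mem_Ioc_le (x H : ℕ) {q : ℕ} (hq : 0 < q) :
    ((#{c ∈ Icc 1 (x + H) | q * c ∈ Ioc x (x + H)} : ℕ) : ℝ) ≤ H / q + 1 := by
  have hsub : {c ∈ Icc 1 (x + H) | q * c ∈ Ioc x (x + H)} ⊆ Ioc (x / q) ((x + H) / q) := by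
    intro c hc
    simp only [mem_filter, mem_Ioc] at hc ⊢
    rw [Nat.div_lt_iff_lt_mul hq, Nat.le_div_iff_mul_le hq, mul_comm c]
    exact hc.2
  have h1 := card_le_card hsub
  rw [Nat.card_Ioc] at h1
  have h2 : (x + H) / q ≤ x / q + H / q + 1 := by
    rw [Nat.add_div hq]; split_ifs <;> omega
  have h3 : #{c ∈ Icc 1 (x + H) | q * c ∈ Ioc x (x + H)} ≤ H / q + 1 :=
    h1.trans (Nat.sub_le_iff_le_add.2 (by linarith))
  calc _ ≤ (((H / q : ℕ) : ℝ)) + 1 := by exact_mod_cast h3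
    _ ≤ _ := by gcongr; exact Nat.cast_div_le

/-- A natural number dividing a product splits into divisors of the factors. -/
theorem exists_prod_eq_of_dvd_prod {k : ℕ} (m : Fin k → ℕ) (n : ℕ) (h : n ∣ ∏ j, m j) :
    ∃ d : Fin k → ℕ, (∀ j, d j ∣ m j) ∧ ∏ j, d j = n := by
  induction k generalizing n with
  | zero => exact ⟨m, fun j => j.elim0, by simpa using (Nat.dvd_one.1 (by simpa using h)).symm⟩
  | succ k ih =>
    rw [Fin.prod_univ_succ] at h
    obtain ⟨a, b, ha, hb, rfl⟩ := exists_dvd_and_dvd_of_dvd_mul h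
    obtain ⟨d, hd, rfl⟩ := ih _ b hb
    exact ⟨Fin.cons a d, Fin.cases (by simpa using ha) (by simpa using hd),
      by simp [Fin.prod_univ_succ]⟩

/-- Two factorizations of the same number have a common refinement. -/
theorem exists_matrix_of_prod_eq_prod {r k : ℕ} (n : Fin r → ℕ) (m : Fin k → ℕ)
    (hm : ∀ j, m j ≠ 0) (h : ∏ i, n i = ∏ j, m j) :
    ∃ A : Fin k → Fin r → ℕ, (∀ i, ∏ j, A j i = n i) ∧ ∀ j, ∏ i, A j i = m j := by
  induction r generalizing m with
  | zero =>
    refine ⟨fun _ i => i.elim0, fun i => i.elim0, fun j => ?_⟩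
    have h' : ∏ j, m j = 1 := by simpa using h.symm
    have := (Finset.prod_eq_one_iff.1 h') j (mem_univ j)
    simp [this]
  | succ r ih =>
    rw [Fin.prod_univ_succ] at h
    obtain ⟨d, hd, hd0⟩ := exists_prod_eq_of_dvd_prod m (n 0) ⟨_, h.symm⟩
    choose q hq using hd
    have hpos : n 0 ≠ 0 := fun h0 => by
      rw [h0, zero_mul] at h
      exact Finset.prod_ne_zero_iff.2 (fun j _ => hm j) h.symm
    have hprod : ∏ i : Fin r, n i.succ = ∏ j, q j := by
      have : n 0 * ∏ i : Fin r, n i.succ = n 0 * ∏ j, q j := by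
        rw [h, ← hd0, ← prod_mul_distrib]; exact prod_congr rfl fun j _ => hq j
      exact Nat.eq_of_mul_eq_mul_left (Nat.pos_of_ne_zero hpos) this
    obtain ⟨A, hA1, hA2⟩ := ih (fun i => n i.succ) q
      (fun j hj => hm j (by rw [hq j, hj, mul_zero])) hprod
    refine ⟨fun j => Fin.cons (d j) (A j), Fin.cases (by simpa using hd0) (by simpa using hA1),
      fun j => ?_⟩
    rw [Fin.prod_univ_succ]
    simp [hA2, ← hq]

/-- The `r`-tuples of positive integers whose product, multiplied by `d`, lies in `(x, x + H]`. -/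
def mulTuples (r d x H : ℕ) : Finset (Fin r → ℕ) :=
  {a ∈ Fintype.piFinset fun _ => Icc 1 (x + H) | d * ∏ i, a i ∈ Ioc x (x + H)}

theorem mem_mulTuples {r d x H : ℕ} {a : Fin r → ℕ} :
    a ∈ mulTuples r d x H ↔
      (∀ i, a i ∈ Icc 1 (x + H)) ∧ d * ∏ i, a i ∈ Ioc x (x + H) := by
  simp [mulTuples]

theorem sum_inv_le_one_add_log (N : ℕ) :
    ∑ c ∈ Icc 1 N, ((c : ℝ))⁻¹ ≤ 1 + Real.log N := by
  have := harmonic_le_one_add_log N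
  rw [harmonic_eq_sum_Icc] at this
  push_cast at this
  exact this

theorem sum_prod_inv_le (s N : ℕ) :
    ∑ b ∈ Fintype.piFinset fun _ : Fin s => Icc 1 N, ∏ i, ((b i : ℝ))⁻¹ ≤
      (1 + Real.log N) ^ s := by
  rw [← sum_pow' (Icc 1 N) (fun c : ℕ => ((c : ℝ))⁻¹) s]
  exact pow_le_pow_left₀ (sum_nonneg fun _ _ => by positivity) (sum_inv_le_one_add_log N) s

theorem card_mulTuples_filter_removeNth_le (s d x H : ℕ) (hd : 0 < d) (i : Fin (s + 1)) :
    ((#{a ∈ mulTuples (s + 1) d x H | d * ∏ j, a (i.succAbove j) ≤ 2 * H} : ℕ) : ℝ) ≤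
      3 * H / d * (1 + Real.log ((x + H : ℕ) : ℝ)) ^ s := by
  set B : Finset (Fin s → ℕ) :=
    {b ∈ Fintype.piFinset fun _ => Icc 1 (x + H) | d * ∏ j, b j ≤ 2 * H}
  set S := {a ∈ mulTuples (s + 1) d x H | d * ∏ j, a (i.succAbove j) ≤ 2 * H}
  have hS : ∀ a ∈ S, i.removeNth a ∈ B := by
    intro a ha
    obtain ⟨ha1, ha2⟩ := mem_filter.1 ha
    rw [mem_mulTuples] at ha1
    refine mem_filter.2 ⟨Fintype.mem_piFinset.2 fun j => ha1.1 _, ha2⟩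
  have hfib : ∀ b ∈ B, ((#{a ∈ S | i.removeNth a = b} : ℕ) : ℝ) ≤
      3 * H / d * ∏ j, ((b j : ℝ))⁻¹ := by
    intro b hb
    obtain ⟨hb1, hb2⟩ := mem_filter.1 hb
    have hpos : 0 < d * ∏ j, b j := Nat.mul_pos hd <| Finset.prod_pos fun j _ =>
      (mem_Icc.1 (Fintype.mem_piFinset.1 hb1 j)).1
    have hle : #{a ∈ S | i.removeNth a = b} ≤
        #{c ∈ Icc 1 (x + H) | (d * ∏ j, b j) * c ∈ Ioc x (x + H)} := by
      refine card_le_card_of_injOn (fun a => a i) ?_ ?_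
      · intro a ha
        obtain ⟨ha1, rfl⟩ := mem_filter.1 ha
        obtain ⟨ha2, -⟩ := mem_filter.1 ha1
        rw [mem_mulTuples, Fin.prod_univ_succAbove _ i] at ha2
        refine mem_coe.2 (mem_filter.2 ⟨ha2.1 i, ?_⟩)
        have := ha2.2
        rwa [mul_comm (a i), ← mul_assoc] at this
      · intro a ha a' ha' h
        have h1 := (mem_filter.1 (mem_coe.1 ha)).2
        have h2 := (mem_filter.1 (mem_coe.1 ha')).2
        rw [← Fin.insertNth_self_removeNth i a, ← Fin.insertNth_self_removeNth i a', h1, h2]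
        exact congrArg (fun c => (Fin.insertNth i c b : Fin (s + 1) → ℕ)) h
    have h0 : (0 : ℝ) < ((d * ∏ j, b j : ℕ) : ℝ) := by exact_mod_cast hpos
    have h1 : (1 : ℝ) ≤ 2 * H / ((d * ∏ j, b j : ℕ) : ℝ) := by
      rw [le_div_iff₀ h0, one_mul]; exact_mod_cast hb2
    calc ((#{a ∈ S | i.removeNth a = b} : ℕ) : ℝ) ≤ H / ((d * ∏ j, b j : ℕ) : ℝ) + 1 :=
          (Nat.cast_le.2 hle).trans (card_mul_mem_Ioc_le x H hpos)
      _ ≤ H / ((d * ∏ j, b j : ℕ) : ℝ) + 2 * H / ((d * ∏ j, b j : ℕ) : ℝ) := by gcongr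
      _ = 3 * H / d * ∏ j, ((b j : ℝ))⁻¹ := by
        rw [prod_inv_distrib]; push_cast; rw [← add_div, div_mul_eq_div_div]; ring
  calc ((#S : ℕ) : ℝ) = ∑ b ∈ B, ((#{a ∈ S | i.removeNth a = b} : ℕ) : ℝ) := by
        rw [card_eq_sum_card_fiberwise hS]; push_cast; rfl
    _ ≤ ∑ b ∈ B, 3 * H / d * ∏ j, ((b j : ℝ))⁻¹ := sum_le_sum hfib
    _ ≤ ∑ b ∈ Fintype.piFinset fun _ : Fin s => Icc 1 (x + H),
          3 * H / d * ∏ j, ((b j : ℝ))⁻¹ :=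
        sum_le_sum_of_subset_of_nonneg (filter_subset _ _)
          fun _ _ _ => mul_nonneg (by positivity) (prod_nonneg fun _ _ => by positivity)
    _ ≤ _ := by
      rw [← mul_sum]
      exact mul_le_mul_of_nonneg_left (sum_prod_inv_le s _) (by positivity)

/-- If `d` is so small that `(x, x + H]` contains many multiples of `d`, then `d * ∏ a` lies in
`(x, x + H]` about as often as expected, since the largest entry of `a` can be chosen last. -/
theorem card_mulTuples_succ_le (s d x H : ℕ) (hd : 0 < d) (hHx : H ≤ x)
    (h : d * x ^ s ≤ H ^ (s + 1)) :
    ((#(mulTuples (s + 1) d x H) : ℕ) : ℝ) ≤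
      (s + 1) * (3 * H / d * (1 + Real.log ((x + H : ℕ) : ℝ)) ^ s) := by
  have hsub : mulTuples (s + 1) d x H ⊆ (univ : Finset (Fin (s + 1))).biUnion fun i =>
      {a ∈ mulTuples (s + 1) d x H | d * ∏ j, a (i.succAbove j) ≤ 2 * H} := by
    intro a ha
    obtain ⟨i, -, hi⟩ := exists_max_image (univ : Finset (Fin (s + 1))) a univ_nonempty
    refine mem_biUnion.2 ⟨i, mem_univ _, mem_filter.2 ⟨ha, ?_⟩⟩
    rw [mem_mulTuples, Fin.prod_univ_succAbove _ i, mem_Ioc] at ha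
    set e := ∏ j, a (i.succAbove j)
    have he : e ≤ a i ^ s := by
      calc e ≤ ∏ _j : Fin s, a i := prod_le_prod' fun j _ => hi _ (mem_univ _)
        _ = a i ^ s := by simp
    refine le_of_pow_le_pow_left₀ (Nat.succ_ne_zero s) (Nat.zero_le _) ?_
    calc (d * e) ^ (s + 1) = d ^ (s + 1) * e ^ s * e := by ring
      _ ≤ d ^ (s + 1) * e ^ s * a i ^ s := by gcongr
      _ = d * (d * (a i * e)) ^ s := by ring
      _ ≤ d * (2 * x) ^ s := Nat.mul_le_mul_left _ (Nat.pow_le_pow_left (by omega) s)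
      _ = 2 ^ s * (d * x ^ s) := by ring
      _ ≤ 2 ^ (s + 1) * H ^ (s + 1) := by gcongr <;> omega
      _ = (2 * H) ^ (s + 1) := by ring
  calc ((#(mulTuples (s + 1) d x H) : ℕ) : ℝ)
      ≤ ∑ i : Fin (s + 1),
        ((#{a ∈ mulTuples (s + 1) d x H | d * ∏ j, a (i.succAbove j) ≤ 2 * H} : ℕ) : ℝ) := by
        exact_mod_cast (card_le_card hsub).trans card_biUnion_le
    _ ≤ ∑ _i : Fin (s + 1), 3 * H / d * (1 + Real.log ((x + H : ℕ) : ℝ)) ^ s :=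
        sum_le_sum fun i _ => card_mulTuples_filter_removeNth_le s d x H hd i
    _ = _ := by simp

theorem card_mulTuples_le_of_le (r d x H : ℕ) (hd : 0 < d) (hxH : x ≤ H) (hdH : d ≤ 2 * H)
    (hH : 1 ≤ H) :
    ((#(mulTuples r d x H) : ℕ) : ℝ) ≤
      3 * H / d * (1 + Real.log ((x + H : ℕ) : ℝ)) ^ r := by
  have hl : 0 ≤ Real.log ((x + H : ℕ) : ℝ) := Real.log_natCast_nonneg _
  cases r with
  | zero =>
    have h1 : #(mulTuples 0 d x H) ≤ 1 := (card_filter_le _ _).trans (by simp)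
    have h2 : (1 : ℝ) ≤ 3 * H / d := by
      rw [le_div_iff₀ (by exact_mod_cast hd), one_mul]
      exact_mod_cast (by omega : d ≤ 3 * H)
    rw [pow_zero, mul_one]
    exact le_trans (by exact_mod_cast h1) h2
  | succ s =>
    have hEq : mulTuples (s + 1) d x H =
        {a ∈ mulTuples (s + 1) d x H | d * ∏ j, a ((0 : Fin (s + 1)).succAbove j) ≤ 2 * H} := by
      refine (filter_true_of_mem fun a ha => ?_).symm
      rw [mem_mulTuples, Fin.prod_univ_succAbove _ 0, mem_Ioc] at ha
      calc _ = d * (1 * ∏ j, a ((0 : Fin (s + 1)).succAbove j)) := by ring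
        _ ≤ d * (a 0 * ∏ j, a ((0 : Fin (s + 1)).succAbove j)) := by
          gcongr; exact (mem_Icc.1 (ha.1 0)).1
        _ ≤ 2 * H := by omega
    rw [hEq]
    refine (card_mulTuples_filter_removeNth_le s d x H hd 0).trans ?_
    gcongr
    · linarith
    · omega

theorem card_mulTuples_le_card_divisors (r d x H : ℕ) (hd : 0 < d) :
    #(mulTuples r d x H) ≤
      ∑ m ∈ {c ∈ Icc 1 (x + H) | d * c ∈ Ioc x (x + H)}, #m.divisors ^ r := by
  have hsub : mulTuples r d x H ⊆ {c ∈ Icc 1 (x + H) | d * c ∈ Ioc x (x + H)}.biUnion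
      fun m => Fintype.piFinset fun _ : Fin r => m.divisors := by
    intro a ha
    rw [mem_mulTuples] at ha
    have hpos : 0 < ∏ i, a i := Finset.prod_pos fun i _ => (mem_Icc.1 (ha.1 i)).1
    refine mem_biUnion.2 ⟨∏ i, a i, mem_filter.2 ⟨mem_Icc.2 ⟨hpos, ?_⟩, ha.2⟩, ?_⟩
    · exact (Nat.le_mul_of_pos_left _ hd).trans (mem_Ioc.1 ha.2).2
    · exact Fintype.mem_piFinset.2 fun i =>
        Nat.mem_divisors.2 ⟨dvd_prod_of_mem _ (mem_univ i), hpos.ne'⟩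
  refine (card_le_card hsub).trans (card_biUnion_le.trans (sum_le_sum fun m _ => ?_))
  simp

theorem exists_card_mulTuples_le {r k : ℕ} (hrk : r ≤ k) :
    ∃ C : ℝ, 0 ≤ C ∧ ∀ (x H d : ℕ) (W : ℝ), 1 ≤ H → H ≤ x → 1 ≤ d → d ≤ H →
      (1 + Real.log ((x + H : ℕ) : ℝ)) ^ k ≤ W →
      ((x : ℝ) / H) ^ (1 / (2 * (k + 1)) : ℝ) ≤ W →
      ((#(mulTuples r d x H) : ℕ) : ℝ) ≤ C * (H / d) * W := by
  cases r with
  | zero =>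
    refine ⟨0, le_rfl, fun x H d W hH hHx hd hdH _ _ => ?_⟩
    have : mulTuples 0 d x H = ∅ := by
      refine eq_empty_of_forall_notMem fun a ha => ?_
      have := (mem_Ioc.1 (mem_mulTuples.1 ha).2).1
      simp at this
      omega
    simp [this]
  | succ s =>
    set η : ℝ := 1 / (2 * (k + 1)) with hη
    have hη0 : 0 < η := by positivity
    set ε : ℝ := η / ((s + 1 : ℕ) * (s + 1 : ℕ)) with hε
    have hε0 : 0 < ε := by positivity
    obtain ⟨C₀, hC₀, hdiv⟩ := exists_card_divisors_le_rpow hε0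
    refine ⟨3 * (s + 1) + 2 * (C₀ * 2 ^ ε) ^ (s + 1), by positivity,
      fun x H d W hH hHx hd hdH hW1 hW2 => ?_⟩
    have hHpos : (0 : ℝ) < H := by exact_mod_cast hH
    have hxpos : (0 : ℝ) < x := by exact_mod_cast hH.trans hHx
    have hdpos : (0 : ℝ) < d := by exact_mod_cast hd
    have hl : 0 ≤ Real.log ((x + H : ℕ) : ℝ) := Real.log_natCast_nonneg _
    have hW0 : 0 ≤ W := le_trans (by positivity) hW1
    by_cases h : d * x ^ s ≤ H ^ (s + 1)
    · calc _ ≤ (s + 1) * (3 * H / d * (1 + Real.log ((x + H : ℕ) : ℝ)) ^ s) :=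
            card_mulTuples_succ_le s d x H hd hHx h
        _ ≤ (s + 1) * (3 * H / d * W) := by
            gcongr
            exact (pow_le_pow_right₀ (by linarith) (by omega)).trans hW1
        _ = 3 * (s + 1) * (H / d) * W := by ring
        _ ≤ _ := by gcongr; linarith [show 0 ≤ 2 * (C₀ * 2 ^ ε) ^ (s + 1) by positivity]
    · push Not at h
      have hm : ∀ m ∈ {c ∈ Icc 1 (x + H) | d * c ∈ Ioc x (x + H)},
          ((#m.divisors ^ (s + 1) : ℕ) : ℝ) ≤ (C₀ * 2 ^ ε) ^ (s + 1) * W := by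
        intro m hm
        simp only [mem_filter, mem_Icc, mem_Ioc] at hm
        have h1 : (m : ℝ) ≤ 2 * (x / d) := by
          rw [mul_div_assoc', le_div_iff₀ hdpos, mul_comm]
          exact_mod_cast (by omega : d * m ≤ 2 * x)
        have h2 : (x : ℝ) / d ≤ (x / H) ^ (s + 1) := by
          rw [div_pow, div_le_div_iff₀ hdpos (by positivity)]
          have h' : (H : ℝ) ^ (s + 1) ≤ d * x ^ s := by exact_mod_cast h.le
          calc (x : ℝ) * H ^ (s + 1) ≤ x * (d * x ^ s) := by gcongr
            _ = _ := by ring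
        have h3 : ((((x : ℝ) / H) ^ (s + 1)) ^ ε) ^ (s + 1) = ((x : ℝ) / H) ^ η := by
          rw [← Real.rpow_natCast, ← Real.rpow_natCast, ← Real.rpow_mul (by positivity),
            ← Real.rpow_mul (by positivity)]
          congr 1
          rw [hε]; field_simp
        push_cast
        calc (#m.divisors : ℝ) ^ (s + 1) ≤ (C₀ * (m : ℝ) ^ ε) ^ (s + 1) := by
              gcongr; exact hdiv m (by omega)
          _ ≤ (C₀ * (2 * (x / H) ^ (s + 1)) ^ ε) ^ (s + 1) := by
              gcongr; exact h1.trans (by gcongr)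
          _ = (C₀ * 2 ^ ε) ^ (s + 1) * ((x : ℝ) / H) ^ η := by
              rw [Real.mul_rpow (by norm_num) (by positivity), ← mul_assoc, mul_pow, h3]
          _ ≤ _ := by gcongr
      calc _ ≤ ∑ m ∈ {c ∈ Icc 1 (x + H) | d * c ∈ Ioc x (x + H)},
              ((#m.divisors ^ (s + 1) : ℕ) : ℝ) := by
            exact_mod_cast card_mulTuples_le_card_divisors (s + 1) d x H hd
        _ ≤ (H / d + 1) * ((C₀ * 2 ^ ε) ^ (s + 1) * W) := by
            refine (sum_le_card_nsmul _ _ _ hm).trans ?_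
            rw [nsmul_eq_mul]
            gcongr
            exact card_mul_mem_Ioc_le x H hd
        _ ≤ (H / d + H / d) * ((C₀ * 2 ^ ε) ^ (s + 1) * W) := by
            gcongr
            rw [one_le_div₀ hdpos]; exact_mod_cast hdH
        _ = 2 * (C₀ * 2 ^ ε) ^ (s + 1) * (H / d) * W := by ring
        _ ≤ _ := by gcongr; linarith [show (0 : ℝ) ≤ 3 * (s + 1) by positivity]

theorem card_le_sum_prod_card_mulTuples {r x H : ℕ}
    (S : Finset ((Fin (r + 1) → ℕ) × (Fin (r + 1) → ℕ))) (Q : Finset (Fin (r + 1) → ℕ))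
    (hS : ∀ p ∈ S, (∀ j, p.2 j ∈ Ioc x (x + H)) ∧ ∏ i, p.1 i = ∏ j, p.2 j)
    (hQ : ∀ p ∈ S, ∀ d : Fin (r + 1) → ℕ, (∀ j, d j ∣ p.2 j) → ∏ j, d j = p.1 0 → d ∈ Q) :
    #S ≤ ∑ d ∈ Q, ∏ j, #(mulTuples r (d j) x H) := by
  have hsub : S ⊆ (Q.sigma fun d => Fintype.piFinset fun j => mulTuples r (d j) x H).image
      fun q => (Fin.cons (∏ j, q.1 j) fun i => ∏ j, q.2 j i, fun j => q.1 j * ∏ i, q.2 j i) := by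
    rintro ⟨n, m⟩ hp
    obtain ⟨hm, hprod⟩ := hS _ hp
    have hm0 : ∀ j, m j ≠ 0 := fun j => by have := (mem_Ioc.1 (hm j)).1; simp at this; omega
    obtain ⟨A, hA1, hA2⟩ := exists_matrix_of_prod_eq_prod n m hm0 hprod
    have hdvd : ∀ j i, A j i ∣ m j := fun j i => hA2 j ▸ dvd_prod_of_mem _ (mem_univ i)
    have hsplit : ∀ j, A j 0 * ∏ i : Fin r, A j i.succ = m j := fun j => by
      rw [← Fin.prod_univ_succ]; exact hA2 j
    refine mem_image.2 ⟨⟨fun j => A j 0, fun j i => A j i.succ⟩, mem_sigma.2 ⟨?_, ?_⟩, ?_⟩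
    · exact hQ _ hp _ (fun j => hdvd j 0) (hA1 0)
    · refine Fintype.mem_piFinset.2 fun j => mem_mulTuples.2 ⟨fun i => mem_Icc.2 ⟨?_, ?_⟩, ?_⟩
      · exact Nat.pos_of_dvd_of_pos (hdvd j _) (Nat.pos_of_ne_zero (hm0 j))
      · exact (Nat.le_of_dvd (Nat.pos_of_ne_zero (hm0 j)) (hdvd j _)).trans (mem_Ioc.1 (hm j)).2
      · simp only [hsplit]; exact hm j
    · refine Prod.ext ?_ (funext hsplit)
      refine funext (Fin.cases ?_ fun i => ?_)
      · simpa using hA1 0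
      · simpa using hA1 i.succ
  refine (card_le_card hsub).trans (card_image_le.trans ?_)
  simp [card_sigma, Fintype.card_piFinset]

/-- The solutions counted by `eqProdCount`, as a finset. -/
def eqProdFinset (k x H : ℕ) : Finset ((Fin k → ℕ) × (Fin k → ℕ)) :=
  {p ∈ (Fintype.piFinset fun _ => Ioc x (x + H)) ×ˢ (Fintype.piFinset fun _ => Ioc x (x + H)) |
    ∏ i, p.1 i = ∏ i, p.2 i}

theorem mem_eqProdFinset {k x H : ℕ} {p : (Fin k → ℕ) × (Fin k → ℕ)} :
    p ∈ eqProdFinset k x H ↔ (∀ i, p.1 i ∈ Ioc x (x + H)) ∧ (∀ i, p.2 i ∈ Ioc x (x + H)) ∧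
      ∏ i, p.1 i = ∏ i, p.2 i := by
  simp [eqProdFinset, and_assoc]

theorem eqProdCount_eq_card (k x H : ℕ) : eqProdCount k x H = #(eqProdFinset k x H) :=
  Nat.subtype_card _ fun _ => mem_eqProdFinset

theorem exists_card_disjoint_solutions_le {r k : ℕ} (hrk : r + 1 ≤ k) :
    ∃ C : ℝ, 0 ≤ C ∧ ∀ (x H : ℕ) (W : ℝ), 1 ≤ H → H ≤ x →
      (1 + Real.log ((x + H : ℕ) : ℝ)) ^ k ≤ W →
      ((x : ℝ) / H) ^ (1 / (2 * (k + 1)) : ℝ) ≤ W →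
      ((#{p ∈ eqProdFinset (r + 1) x H | ∀ i j, p.1 i ≠ p.2 j} : ℕ) : ℝ) ≤
        C * (H : ℝ) ^ (r + 1) * (H / x) * W ^ (k + 1) := by
  obtain ⟨C₁, hC₁, h₁⟩ := exists_card_mulTuples_le (show r ≤ k by omega)
  obtain ⟨C₂, hC₂, h₂⟩ := exists_card_mulTuples_le hrk
  refine ⟨C₁ ^ (r + 1) * C₂, by positivity, fun x H W hH hHx hW1 hW2 => ?_⟩
  have hHpos : (0 : ℝ) < H := by exact_mod_cast hH
  have hxpos : (0 : ℝ) < x := by exact_mod_cast hH.trans hHx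
  have hl : 0 ≤ Real.log ((x + H : ℕ) : ℝ) := Real.log_natCast_nonneg _
  have hW : 1 ≤ W := (one_le_pow₀ (by linarith)).trans hW1
  set Q : Finset (Fin (r + 1) → ℕ) :=
    {d ∈ Fintype.piFinset fun _ => Icc 1 H | ∏ j, d j ∈ Ioc x (x + H)} with hQdef
  have hQ : ((#Q : ℕ) : ℝ) ≤ C₂ * H * W := by
    have hsub : Q ⊆ mulTuples (r + 1) 1 x H := by
      intro d hd
      obtain ⟨hd1, hd2⟩ := mem_filter.1 hd
      refine mem_mulTuples.2 ⟨fun j => ?_, by rwa [one_mul]⟩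
      have := mem_Icc.1 (Fintype.mem_piFinset.1 hd1 j)
      exact mem_Icc.2 ⟨this.1, by omega⟩
    have := h₂ x H 1 W hH hHx le_rfl hH hW1 hW2
    rw [Nat.cast_one, div_one] at this
    exact (Nat.cast_le.2 (card_le_card hsub)).trans this
  have hterm : ∀ d ∈ Q, ∏ j, ((#(mulTuples r (d j) x H) : ℕ) : ℝ) ≤
      (C₁ * H * W) ^ (r + 1) / x := by
    intro d hd
    obtain ⟨hd1, hd2⟩ := mem_filter.1 hd
    have hdx : (x : ℝ) ≤ ∏ j, (d j : ℝ) := by exact_mod_cast (mem_Ioc.1 hd2).1.le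
    calc _ ≤ ∏ j, (C₁ * H * W) / (d j : ℝ) := by
          refine prod_le_prod (fun _ _ => by positivity) fun j _ => ?_
          have := mem_Icc.1 (Fintype.mem_piFinset.1 hd1 j)
          exact (h₁ x H (d j) W hH hHx this.1 this.2 hW1 hW2).trans_eq (by ring)
      _ = (C₁ * H * W) ^ (r + 1) / ∏ j, (d j : ℝ) := by
          rw [prod_div_distrib]; simp
      _ ≤ _ := by gcongr
  have hmain : #{p ∈ eqProdFinset (r + 1) x H | ∀ i j, p.1 i ≠ p.2 j} ≤
      ∑ d ∈ Q, ∏ j, #(mulTuples r (d j) x H) := by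
    refine card_le_sum_prod_card_mulTuples _ _ (fun p hp => ?_) fun p hp d hd hd0 => ?_
    · exact (mem_eqProdFinset.1 (mem_filter.1 hp).1).2
    · obtain ⟨hp1, hp2⟩ := mem_filter.1 hp
      obtain ⟨hn, hm, -⟩ := mem_eqProdFinset.1 hp1
      refine mem_filter.2 ⟨Fintype.mem_piFinset.2 fun j => mem_Icc.2 ?_, hd0 ▸ hn 0⟩
      have hmj := mem_Ioc.1 (hm j)
      have hn0 := mem_Ioc.1 (hn 0)
      have hdn : d j ∣ p.1 0 := hd0 ▸ dvd_prod_of_mem _ (mem_univ j)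
      refine ⟨Nat.pos_of_dvd_of_pos (hd j) (by omega), ?_⟩
      rcases lt_or_gt_of_ne (hp2 0 j) with h | h
      · exact (Nat.le_of_dvd (by omega) (Nat.dvd_sub (hd j) hdn)).trans (by omega)
      · exact (Nat.le_of_dvd (by omega) (Nat.dvd_sub hdn (hd j))).trans (by omega)
  calc _ ≤ ∑ d ∈ Q, ∏ j, ((#(mulTuples r (d j) x H) : ℕ) : ℝ) := by exact_mod_cast hmain
    _ ≤ (C₂ * H * W) * ((C₁ * H * W) ^ (r + 1) / x) := by
        refine (sum_le_card_nsmul _ _ _ hterm).trans ?_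
        rw [nsmul_eq_mul]
        gcongr
    _ = C₁ ^ (r + 1) * C₂ * (H : ℝ) ^ (r + 1) * (H / x) * W ^ (r + 2) := by
        rw [mul_pow, mul_pow]; ring
    _ ≤ _ := mul_le_mul_of_nonneg_left (pow_le_pow_right₀ hW (by omega)) (by positivity)

theorem exists_perm_insertNth {l : ℕ} (i j : Fin (l + 1)) (v : ℕ) (n : Fin l → ℕ)
    (σ : Equiv.Perm (Fin l)) :
    ∃ τ : Equiv.Perm (Fin (l + 1)),
      (j.insertNth v (n ∘ σ) : Fin (l + 1) → ℕ) = (i.insertNth v n : Fin (l + 1) → ℕ) ∘ τ := by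
  refine ⟨(finSuccEquiv' j).trans ((Equiv.optionCongr σ).trans (finSuccEquiv' i).symm), ?_⟩
  refine funext ((Fin.forall_iff_succAbove j).2 ⟨?_, fun a => ?_⟩)
  · simp
  · simp

open Classical in
/-- The solutions for which one side is not a permutation of the other. -/
noncomputable def nonPermSolutions (k x H : ℕ) : Finset ((Fin k → ℕ) × (Fin k → ℕ)) :=
  {p ∈ eqProdFinset k x H | ¬ ∃ σ : Equiv.Perm (Fin k), p.2 = p.1 ∘ σ}

theorem card_nonPermSolutions_succ_le (l x H : ℕ) :
    #(nonPermSolutions (l + 1) x H) ≤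
      #{p ∈ eqProdFinset (l + 1) x H | ∀ i j, p.1 i ≠ p.2 j} +
        (l + 1) ^ 2 * H * #(nonPermSolutions l x H) := by
  set T := ((univ : Finset (Fin (l + 1) × Fin (l + 1))) ×ˢ Ioc x (x + H)) ×ˢ
    nonPermSolutions l x H with hT
  have hsub : nonPermSolutions (l + 1) x H ⊆
      {p ∈ eqProdFinset (l + 1) x H | ∀ i j, p.1 i ≠ p.2 j} ∪
        T.image fun q => ((q.1.1.1.insertNth q.1.2 q.2.1 : Fin (l + 1) → ℕ),
          (q.1.1.2.insertNth q.1.2 q.2.2 : Fin (l + 1) → ℕ)) := by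
    rintro ⟨n, m⟩ hp
    obtain ⟨hp1, hp2⟩ := mem_filter.1 hp
    by_cases hdis : ∀ i j, n i ≠ m j
    · exact mem_union_left _ (mem_filter.2 ⟨hp1, hdis⟩)
    push Not at hdis
    obtain ⟨i, j, hij⟩ := hdis
    obtain ⟨hn, hm, hprod⟩ := mem_eqProdFinset.1 hp1
    have hni : x < n i ∧ n i ≤ x + H := mem_Ioc.1 (hn i)
    refine mem_union_right _ (mem_image.2 ⟨⟨⟨⟨i, j⟩, n i⟩, ⟨i.removeNth n, j.removeNth m⟩⟩, ?_, ?_⟩)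
    · refine mem_product.2 ⟨mem_product.2 ⟨mem_univ _, hn i⟩, mem_filter.2 ⟨?_, ?_⟩⟩
      · refine mem_eqProdFinset.2 ⟨fun a => hn _, fun a => hm _, ?_⟩
        simp only at hprod
        rw [Fin.prod_univ_succAbove _ i, Fin.prod_univ_succAbove _ j, ← hij] at hprod
        exact Nat.eq_of_mul_eq_mul_left (by omega) hprod
      · rintro ⟨σ, hσ⟩
        obtain ⟨τ, hτ⟩ := exists_perm_insertNth i j (n i) (i.removeNth n) σ
        simp only at hσ
        refine hp2 ⟨τ, ?_⟩
        rw [← hσ, Fin.insertNth_self_removeNth, hij, Fin.insertNth_self_removeNth] at hτ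
        exact hτ
    · refine Prod.ext (Fin.insertNth_self_removeNth i n) ?_
      simp only [hij]
      exact Fin.insertNth_self_removeNth j m
  refine (card_le_card hsub).trans ((card_union_le _ _).trans ?_)
  gcongr
  refine card_image_le.trans ?_
  simp [hT, sq]

theorem exists_card_nonPermSolutions_le {l k : ℕ} (hlk : l ≤ k) :
    ∃ C : ℝ, 0 ≤ C ∧ ∀ (x H : ℕ) (W : ℝ), 1 ≤ H → H ≤ x →
      (1 + Real.log ((x + H : ℕ) : ℝ)) ^ k ≤ W →
      ((x : ℝ) / H) ^ (1 / (2 * (k + 1)) : ℝ) ≤ W →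
      ((#(nonPermSolutions l x H) : ℕ) : ℝ) ≤ C * (H : ℝ) ^ l * (H / x) * W ^ (k + 1) := by
  induction l with
  | zero =>
    refine ⟨0, le_rfl, fun x H W _ _ _ _ => ?_⟩
    have : nonPermSolutions 0 x H = ∅ :=
      eq_empty_of_forall_notMem fun p hp => (mem_filter.1 hp).2 ⟨1, Subsingleton.elim _ _⟩
    simp [this]
  | succ l ih =>
    obtain ⟨C₁, hC₁, h₁⟩ := ih (by omega)
    obtain ⟨C₂, hC₂, h₂⟩ := exists_card_disjoint_solutions_le hlk
    refine ⟨C₂ + (l + 1) ^ 2 * C₁, by positivity, fun x H W hH hHx hW1 hW2 => ?_⟩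
    have h := card_nonPermSolutions_succ_le l x H
    calc ((#(nonPermSolutions (l + 1) x H) : ℕ) : ℝ)
        ≤ ((#{p ∈ eqProdFinset (l + 1) x H | ∀ i j, p.1 i ≠ p.2 j} : ℕ) : ℝ) +
          (l + 1) ^ 2 * H * ((#(nonPermSolutions l x H) : ℕ) : ℝ) := by exact_mod_cast h
      _ ≤ C₂ * (H : ℝ) ^ (l + 1) * (H / x) * W ^ (k + 1) +
          (l + 1) ^ 2 * H * (C₁ * (H : ℝ) ^ l * (H / x) * W ^ (k + 1)) := by
        gcongr
        · exact h₂ x H W hH hHx hW1 hW2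
        · exact h₁ x H W hH hHx hW1 hW2
      _ = _ := by ring

theorem card_eqProdFinset_le_of_le {k x H : ℕ} (hk : 1 ≤ k) (hxH : x ≤ H) (hH : 1 ≤ H) :
    ((#(eqProdFinset k x H) : ℕ) : ℝ) ≤
      3 ^ k * (H : ℝ) ^ k * (1 + Real.log ((2 * H : ℕ) : ℝ)) ^ (k ^ 2) := by
  obtain ⟨r, rfl⟩ := Nat.exists_eq_add_of_le' hk
  set Λ := 1 + Real.log ((2 * H : ℕ) : ℝ)
  have hl : 0 ≤ Real.log ((x + H : ℕ) : ℝ) := Real.log_natCast_nonneg _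
  have hLΛ : 1 + Real.log ((x + H : ℕ) : ℝ) ≤ Λ := by
    simp only [Λ]; gcongr; omega
  have hmain : #(eqProdFinset (r + 1) x H) ≤
      ∑ d ∈ Fintype.piFinset fun _ : Fin (r + 1) => Icc 1 (2 * H),
        ∏ j, #(mulTuples r (d j) x H) := by
    refine card_le_sum_prod_card_mulTuples _ _ (fun p hp => (mem_eqProdFinset.1 hp).2)
      fun p hp d hd _ => Fintype.mem_piFinset.2 fun j => mem_Icc.2 ?_
    have hmj := mem_Ioc.1 ((mem_eqProdFinset.1 hp).2.1 j)
    exact ⟨Nat.pos_of_dvd_of_pos (hd j) (by omega),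
      (Nat.le_of_dvd (by omega) (hd j)).trans (by omega)⟩
  calc _ ≤ ∑ d ∈ Fintype.piFinset fun _ : Fin (r + 1) => Icc 1 (2 * H),
        ∏ j, ((#(mulTuples r (d j) x H) : ℕ) : ℝ) := by exact_mod_cast hmain
    _ ≤ ∑ d ∈ Fintype.piFinset fun _ : Fin (r + 1) => Icc 1 (2 * H),
        ∏ j, (3 * H * Λ ^ r) * ((d j : ℝ))⁻¹ := by
      refine sum_le_sum fun d hd => prod_le_prod (fun _ _ => by positivity) fun j _ => ?_
      have hdj := mem_Icc.1 (Fintype.mem_piFinset.1 hd j)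
      calc _ ≤ 3 * H / (d j : ℝ) * (1 + Real.log ((x + H : ℕ) : ℝ)) ^ r :=
            card_mulTuples_le_of_le r (d j) x H hdj.1 hxH hdj.2 hH
        _ ≤ 3 * H / (d j : ℝ) * Λ ^ r := by gcongr
        _ = _ := by ring
    _ = (3 * H * Λ ^ r) ^ (r + 1) *
        ∑ d ∈ Fintype.piFinset fun _ : Fin (r + 1) => Icc 1 (2 * H), ∏ j, ((d j : ℝ))⁻¹ := by
      rw [mul_sum]
      exact sum_congr rfl fun d _ => by rw [prod_mul_distrib]; simp
    _ ≤ (3 * H * Λ ^ r) ^ (r + 1) * Λ ^ (r + 1) := by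
      have : 0 ≤ Λ := by linarith
      gcongr
      exact sum_prod_inv_le _ _
    _ = _ := by rw [mul_pow, mul_pow, ← pow_mul, mul_assoc, ← pow_add]; ring_nf

theorem pow_le_descFactorial_add (H k : ℕ) :
    H ^ k ≤ H.descFactorial k + k ^ 2 * H ^ (k - 1) := by
  induction k with
  | zero => simp
  | succ k ih =>
    have h1 : k ^ 2 * H ^ (k - 1) * H = k ^ 2 * H ^ k := by
      cases k with
      | zero => simp
      | succ k => rw [mul_assoc, ← pow_succ]; simp
    have h2 : H.descFactorial k ≤ H ^ k := Nat.descFactorial_le_pow H k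
    rw [Nat.descFactorial_succ, Nat.add_sub_cancel]
    calc H ^ (k + 1) = H ^ k * H := pow_succ _ _
      _ ≤ (H.descFactorial k + k ^ 2 * H ^ (k - 1)) * H := by gcongr
      _ = H * H.descFactorial k + k ^ 2 * H ^ k := by rw [add_mul, h1, mul_comm H]
      _ ≤ ((H - k) + k) * H.descFactorial k + k ^ 2 * H ^ k := by gcongr; omega
      _ = (H - k) * H.descFactorial k + (k * H.descFactorial k + k ^ 2 * H ^ k) := by ring
      _ ≤ (H - k) * H.descFactorial k + (k * H ^ k + k ^ 2 * H ^ k) := by gcongr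
      _ ≤ _ := by nlinarith [Nat.zero_le (H ^ k), Nat.zero_le (k * H ^ k)]

open Classical in
theorem card_permSolutions_bounds (k x H : ℕ) :
    k.factorial * H.descFactorial k ≤
        #{p ∈ eqProdFinset k x H | ∃ σ : Equiv.Perm (Fin k), p.2 = p.1 ∘ σ} ∧
      #{p ∈ eqProdFinset k x H | ∃ σ : Equiv.Perm (Fin k), p.2 = p.1 ∘ σ} ≤
        k.factorial * H ^ k := by
  constructor
  · have hcard : Fintype.card ((Fin k ↪ Ioc x (x + H)) × Equiv.Perm (Fin k)) =
        k.factorial * H.descFactorial k := by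
      rw [Fintype.card_prod, Fintype.card_embedding_eq, Fintype.card_perm]
      simp [mul_comm]
    rw [← hcard, ← card_univ]
    refine card_le_card_of_injOn
      (fun q => ((fun i => (q.1 i : ℕ)), (fun i => (q.1 i : ℕ)) ∘ q.2)) ?_ ?_
    · rintro ⟨f, σ⟩ -
      refine mem_coe.2 (mem_filter.2 ⟨mem_eqProdFinset.2
        ⟨fun i => (f i).2, fun i => (f _).2, ?_⟩, σ, rfl⟩)
      exact (Equiv.prod_comp σ fun i => (f i : ℕ)).symm
    · rintro ⟨f, σ⟩ - ⟨g, τ⟩ - h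
      obtain ⟨h1, h2⟩ := Prod.ext_iff.1 h
      have hfg : f = g := by
        ext i
        exact congrFun h1 i
      subst hfg
      refine Prod.ext rfl (Equiv.ext fun i => f.injective (Subtype.ext (congrFun h2 i)))
  · have hsub : {p ∈ eqProdFinset k x H | ∃ σ : Equiv.Perm (Fin k), p.2 = p.1 ∘ σ} ⊆
        ((univ : Finset (Equiv.Perm (Fin k))) ×ˢ
          Fintype.piFinset fun _ : Fin k => Ioc x (x + H)).image fun q => (q.2, q.2 ∘ q.1) := by
      rintro ⟨n, m⟩ hp
      obtain ⟨hp1, σ, hσ⟩ := mem_filter.1 hp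
      refine mem_image.2 ⟨(σ, n), mem_product.2 ⟨mem_univ _, Fintype.mem_piFinset.2
        (mem_eqProdFinset.1 hp1).1⟩, Prod.ext rfl hσ.symm⟩
    refine (card_le_card hsub).trans (card_image_le.trans ?_)
    simp [card_product, Fintype.card_perm]

theorem abs_eqProdCount_sub_le (k x H : ℕ) :
    |(eqProdCount k x H : ℝ) - k.factorial * (H : ℝ) ^ k| ≤
      k.factorial * k ^ 2 * (H : ℝ) ^ (k - 1) + ((#(nonPermSolutions k x H) : ℕ) : ℝ) := by
  classical
  obtain ⟨h1, h2⟩ := card_permSolutions_bounds k x H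
  have hsplit := card_filter_add_card_filter_not (s := eqProdFinset k x H)
    (fun p => ∃ σ : Equiv.Perm (Fin k), p.2 = p.1 ∘ σ)
  have h3 := Nat.mul_le_mul_left k.factorial (pow_le_descFactorial_add H k)
  set P := #{p ∈ eqProdFinset k x H | ∃ σ : Equiv.Perm (Fin k), p.2 = p.1 ∘ σ}
  have hN : eqProdCount k x H = P + #(nonPermSolutions k x H) := by
    rw [eqProdCount_eq_card, ← hsplit, nonPermSolutions]
  have h1' : (k.factorial : ℝ) * H.descFactorial k ≤ P := by exact_mod_cast h1
  have h2' : (P : ℝ) ≤ k.factorial * (H : ℝ) ^ k := by exact_mod_cast h2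
  have h3' : (k.factorial : ℝ) * (H : ℝ) ^ k ≤
      k.factorial * (H.descFactorial k + k ^ 2 * (H : ℝ) ^ (k - 1)) := by exact_mod_cast h3
  rw [hN, Nat.cast_add, abs_le]
  have h4 : (0 : ℝ) ≤ #(nonPermSolutions k x H) := Nat.cast_nonneg _
  have h5 : (0 : ℝ) ≤ k.factorial * k ^ 2 * (H : ℝ) ^ (k - 1) := by positivity
  constructor <;> linarith

theorem one_add_log_two_mul_le {M : ℕ} (hM : 2 ≤ M) {ℓ : ℝ} (hℓ : Real.log M ≤ ℓ) :
    1 + Real.log ((2 * M : ℕ) : ℝ) ≤ 4 * ℓ := by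
  have h2 : Real.log 2 ≤ Real.log M := Real.log_le_log (by norm_num) (by exact_mod_cast hM)
  have h3 := Real.log_two_gt_d9
  push_cast
  rw [Real.log_mul (by norm_num) (by positivity)]
  linarith

theorem exists_card_nonPermSolutions_le_sqrt (k : ℕ) :
    ∃ C : ℝ, 0 ≤ C ∧ ∀ x H : ℕ, 1 ≤ H → H ≤ x →
      ((#(nonPermSolutions k x H) : ℕ) : ℝ) ≤
        C * ((H : ℝ) ^ k * √H / √x +
          (H : ℝ) ^ (k + 1) * (1 + Real.log ((2 * x : ℕ) : ℝ)) ^ (2 * k ^ 2 + 2) / x) := by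
  obtain ⟨C, hC, h⟩ := exists_card_nonPermSolutions_le (le_refl k)
  refine ⟨C, hC, fun x H hH hHx => ?_⟩
  have hHpos : (0 : ℝ) < H := by exact_mod_cast hH
  have hxpos : (0 : ℝ) < x := by exact_mod_cast hH.trans hHx
  set L := 1 + Real.log ((x + H : ℕ) : ℝ)
  set Λ := 1 + Real.log ((2 * x : ℕ) : ℝ)
  have hL : 1 ≤ L := by simp only [L]; linarith [Real.log_natCast_nonneg (x + H)]
  have hLΛ : L ≤ Λ := by simp only [L, Λ]; gcongr; omega
  set V := ((x : ℝ) / H) ^ (1 / (2 * (k + 1)) : ℝ) with hV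
  have hV0 : 0 ≤ V := by positivity
  have hVpow : V ^ (k + 1) = √x / √H := by
    rw [hV, ← Real.rpow_natCast, ← Real.rpow_mul (by positivity), ← Real.sqrt_div hxpos.le,
      Real.sqrt_eq_rpow]
    congr 1
    push_cast
    field_simp
  have hW : max (L ^ k) V ^ (k + 1) ≤ √x / √H + Λ ^ (2 * k ^ 2 + 2) := by
    have hΛ0 : 0 ≤ Λ := by linarith
    rcases max_cases (L ^ k) V with ⟨hm, -⟩ | ⟨hm, -⟩ <;> rw [hm]
    · have : (L ^ k) ^ (k + 1) ≤ Λ ^ (2 * k ^ 2 + 2) := by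
        rw [← pow_mul]
        calc L ^ (k * (k + 1)) ≤ L ^ (2 * k ^ 2 + 2) :=
              pow_le_pow_right₀ hL (by nlinarith [sq_nonneg ((k : ℤ) - 1)])
          _ ≤ _ := by gcongr
      linarith [show 0 ≤ √(x : ℝ) / √H by positivity]
    · rw [hVpow]
      linarith [show 0 ≤ Λ ^ (2 * k ^ 2 + 2) by positivity]
  have hsq : (H : ℝ) / x * (√x / √H) = √H / √x := by
    rw [div_mul_div_comm, div_eq_div_iff (by positivity) (by positivity)]
    nth_rw 1 [← Real.mul_self_sqrt hHpos.le]
    nth_rw 3 [← Real.mul_self_sqrt hxpos.le]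
    ring
  calc _ ≤ C * (H : ℝ) ^ k * (H / x) * max (L ^ k) V ^ (k + 1) :=
        h x H _ hH hHx (le_max_left _ _) (le_max_right _ _)
    _ ≤ C * (H : ℝ) ^ k * (H / x) * (√x / √H + Λ ^ (2 * k ^ 2 + 2)) := by gcongr
    _ = C * ((H : ℝ) ^ k * (H / x * (√x / √H)) +
        (H : ℝ) ^ (k + 1) * Λ ^ (2 * k ^ 2 + 2) / x) := by ring
    _ = _ := by rw [hsq]; ring

end ShortIntervalEnergy

/-- for every `k ≥ 1` there is `C_k > 0` such that for all integers
`x, H ≥ 1`, the number of solutions of `n₁⋯n_k = n_{k+1}⋯n_{2k}` in `(x, x+H]^{2k}`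
differs from `k!·H^k` by at most
`C_k · (H^{k−1} + H^{k+1/2}/max(x,H)^{1/2} + H^{k+1}·(log x + log H)^{2k²+2}/max(x,H))`. -/
theorem stmt1 (k : ℕ) (hk : 1 ≤ k) :
    ∃ C : ℝ, 0 < C ∧ ∀ x H : ℕ, 1 ≤ x → 1 ≤ H →
      |(eqProdCount k x H : ℝ) - (k.factorial : ℝ) * (H : ℝ) ^ k| ≤
        C * ((H : ℝ) ^ (k - 1)
          + (H : ℝ) ^ k * Real.sqrt (H : ℝ) / Real.sqrt ((max x H : ℕ) : ℝ)
          + (H : ℝ) ^ (k + 1) * (Real.log x + Real.log H) ^ (2 * k ^ 2 + 2)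
              / ((max x H : ℕ) : ℝ)) := by
  obtain ⟨C, hC, hE⟩ := ShortIntervalEnergy.exists_card_nonPermSolutions_le_sqrt k
  set F : ℝ := (k.factorial : ℝ)
  have hF : 1 ≤ F := by simp only [F]; exact_mod_cast Nat.one_le_iff_ne_zero.2 k.factorial_ne_zero
  set A : ℝ := 4 ^ (2 * k ^ 2 + 2) with hA
  have hA0 : 1 ≤ A := one_le_pow₀ (by norm_num)
  obtain ⟨K, hK⟩ : ∃ K : ℝ, K = F * k ^ 2 + C * A + C + F + 3 ^ k * A := ⟨_, rfl⟩
  have hk3 : 0 ≤ (3 : ℝ) ^ k * A := by positivity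
  have hFk : 0 ≤ F * (k : ℝ) ^ 2 := by positivity
  have hCA : 0 ≤ C * A := by positivity
  refine ⟨K, by linarith, fun x H hx hH => ?_⟩
  have hHpos : (0 : ℝ) < H := by exact_mod_cast hH
  have hxpos : (0 : ℝ) < x := by exact_mod_cast hx
  have hlx : 0 ≤ Real.log x := Real.log_natCast_nonneg _
  have hlH : 0 ≤ Real.log H := Real.log_natCast_nonneg _
  set ℓ := Real.log x + Real.log H with hℓ
  have hℓ0 : 0 ≤ ℓ := by linarith
  have ha : 0 ≤ (H : ℝ) ^ (k - 1) := by positivity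
  rcases le_or_gt H x with hHx | hxH
  · rw [max_eq_left hHx]
    set b := (H : ℝ) ^ k * √H / √x
    set c := (H : ℝ) ^ (k + 1) * ℓ ^ (2 * k ^ 2 + 2) / x
    have hb : 0 ≤ b := by positivity
    have hc : 0 ≤ c := by positivity
    have hlog : (H : ℝ) ^ (k + 1) * (1 + Real.log ((2 * x : ℕ) : ℝ)) ^ (2 * k ^ 2 + 2) / x ≤
        A * ((H : ℝ) ^ (k - 1) + c) := by
      have hΛ0 : 0 ≤ 1 + Real.log ((2 * x : ℕ) : ℝ) := by
        linarith [Real.log_natCast_nonneg (2 * x)]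
      rcases Nat.lt_or_ge x 2 with h1 | h2
      · obtain rfl : x = 1 := by omega
        obtain rfl : H = 1 := by omega
        have h4 : 1 + Real.log ((2 * 1 : ℕ) : ℝ) ≤ 4 := by
          norm_num; linarith [Real.log_two_lt_d9]
        have h5 := pow_le_pow_left₀ hΛ0 h4 (2 * k ^ 2 + 2)
        have h6 : 0 ≤ A * c := by positivity
        calc _ = (1 + Real.log ((2 * 1 : ℕ) : ℝ)) ^ (2 * k ^ 2 + 2) := by simp
          _ ≤ A := h5
          _ ≤ A + A * c := by linarith
          _ = _ := by simp only [Nat.cast_one, one_pow]; ring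
      · have h4 := ShortIntervalEnergy.one_add_log_two_mul_le h2
          (show Real.log x ≤ ℓ by linarith)
        calc _ ≤ (H : ℝ) ^ (k + 1) * (4 * ℓ) ^ (2 * k ^ 2 + 2) / x := by gcongr
          _ = A * c := by simp only [c, mul_pow, hA]; ring
          _ ≤ _ := by gcongr; linarith
    calc _ ≤ F * k ^ 2 * (H : ℝ) ^ (k - 1) + _ :=
          ShortIntervalEnergy.abs_eqProdCount_sub_le k x H
      _ ≤ F * k ^ 2 * (H : ℝ) ^ (k - 1) + C * (b + A * ((H : ℝ) ^ (k - 1) + c)) := by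
          gcongr
          exact (hE x H hH hHx).trans (by gcongr)
      _ = (F * k ^ 2 + C * A) * (H : ℝ) ^ (k - 1) + C * b + C * A * c := by ring
      _ ≤ K * (H : ℝ) ^ (k - 1) + K * b + K * c := by gcongr <;> linarith
      _ = _ := by ring
  · rw [max_eq_right hxH.le]
    have hb : (H : ℝ) ^ k * √H / √H = (H : ℝ) ^ k := by
      rw [mul_div_assoc, div_self (by positivity), mul_one]
    have hc : (H : ℝ) ^ (k + 1) * ℓ ^ (2 * k ^ 2 + 2) / H = (H : ℝ) ^ k * ℓ ^ (2 * k ^ 2 + 2) := by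
      rw [pow_succ]; field_simp
    rw [hb, hc]
    have h4 := ShortIntervalEnergy.one_add_log_two_mul_le (show 2 ≤ H by omega)
      (show Real.log H ≤ ℓ by linarith)
    have hΛ1 : 1 ≤ 1 + Real.log ((2 * H : ℕ) : ℝ) := by
      linarith [Real.log_natCast_nonneg (2 * H)]
    have hpow : (1 + Real.log ((2 * H : ℕ) : ℝ)) ^ (k ^ 2) ≤ A * ℓ ^ (2 * k ^ 2 + 2) := by
      rw [hA, ← mul_pow]
      exact (pow_le_pow_right₀ hΛ1 (by omega)).trans (pow_le_pow_left₀ (by linarith) h4 _)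
    have hN : (eqProdCount k x H : ℝ) ≤ 3 ^ k * A * ((H : ℝ) ^ k * ℓ ^ (2 * k ^ 2 + 2)) := by
      rw [ShortIntervalEnergy.eqProdCount_eq_card]
      refine (ShortIntervalEnergy.card_eqProdFinset_le_of_le hk hxH.le hH).trans ?_
      calc _ ≤ 3 ^ k * (H : ℝ) ^ k * (A * ℓ ^ (2 * k ^ 2 + 2)) := by gcongr
        _ = _ := by ring
    set c := (H : ℝ) ^ k * ℓ ^ (2 * k ^ 2 + 2)
    have hc0 : 0 ≤ c := by positivity
    calc _ ≤ |(eqProdCount k x H : ℝ)| + |F * (H : ℝ) ^ k| := abs_sub _ _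
      _ = eqProdCount k x H + F * (H : ℝ) ^ k := by
          rw [abs_of_nonneg (by positivity), abs_of_nonneg (by positivity)]
      _ ≤ 0 * (H : ℝ) ^ (k - 1) + F * (H : ℝ) ^ k + 3 ^ k * A * c := by linarith
      _ ≤ K * (H : ℝ) ^ (k - 1) + K * (H : ℝ) ^ k + K * c := by gcongr <;> linarith
      _ = _ := by ring
end
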